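/- arXiv:2507.13866 — 12 statements merged into one kernel-verified Lean document; each statement's English description precedes it below -/
import Mathlib

section
/- A strongly ω-maximal ideal admits a unique representation by a discrete collection of maximal ideals: if D₁ and D₂ are two countably infinite discrete collections of pairwise distinct maximal ideals on ℕ with ⋂ D₁ = ⋂ D₂, then D₁ = D₂ (as sets of ideals). -/
open Set

def IsIdeal (I : Set (Set ℕ)) : Prop :=
  (∀ A : Set ℕ, A.Finite → A ∈ I) ∧
  (∀ A B : Set ℕ, A ⊆ B → B ∈ I → A ∈ I) ∧
  (∀ A B : Set ℕ, A ∈ I → B ∈ I → A ∪ B ∈ I)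

def IsProperIdeal (I : Set (Set ℕ)) : Prop := IsIdeal I ∧ (Set.univ : Set ℕ) ∉ I

def IsMaxIdeal (I : Set (Set ℕ)) : Prop :=
  IsProperIdeal I ∧ ∀ A : Set ℕ, A ∈ I ∨ Aᶜ ∈ I

/-- `U` is the dual ultrafilter of the (maximal) ideal `I`: `A ∈ U ↔ Aᶜ ∈ I`. -/
def IsDualUltra (I : Set (Set ℕ)) (U : Ultrafilter ℕ) : Prop :=
  ∀ A : Set ℕ, A ∈ U ↔ Aᶜ ∈ I

/-- A set is a discrete subset of a topological space if each of its points is isolated in it. -/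
def IsDiscreteSubset {X : Type*} [TopologicalSpace X] (S : Set X) : Prop :=
  ∀ x ∈ S, ∃ V : Set X, IsOpen V ∧ V ∩ S = {x}

/-- The set of dual ultrafilters of a collection of maximal ideals. -/
def DualSet (D : Set (Set (Set ℕ))) : Set (Ultrafilter ℕ) :=
  {U | ∃ K ∈ D, IsDualUltra K U}

/-- An ideal is strongly ω-maximal if it is the intersection of a countably infinite
discrete collection of pairwise distinct maximal ideals. -/
def StronglyOmegaMax (I : Set (Set ℕ)) : Prop :=
  ∃ J : ℕ → Set (Set ℕ), (∀ n, IsMaxIdeal (J n)) ∧ (∀ m n, m ≠ n → J m ≠ J n) ∧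
    (∃ U : ℕ → Ultrafilter ℕ, (∀ n, IsDualUltra (J n) (U n)) ∧
      IsDiscreteSubset (Set.range U)) ∧
    I = ⋂ n, J n

theorem exists_dualUltra {K : Set (Set ℕ)} (h : IsMaxIdeal K) :
    ∃ U : Ultrafilter ℕ, IsDualUltra K U := by
  obtain ⟨⟨⟨hf, hs, hu⟩, hp⟩, hm⟩ := h
  let F : Filter ℕ :=
    { sets := {A | Aᶜ ∈ K}
      univ_sets := by
        show (Set.univ : Set ℕ)ᶜ ∈ K
        exact hf _ (by simp)
      sets_of_superset := by
        intro A B hA hAB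
        exact hs _ _ (compl_subset_compl.2 hAB) hA
      inter_sets := by
        intro A B hA hB
        show (A ∩ B)ᶜ ∈ K
        rw [compl_inter]
        exact hu _ _ hA hB }
  have hF : ∀ A : Set ℕ, A ∈ F ↔ Aᶜ ∈ K := fun A => Iff.rfl
  refine ⟨Ultrafilter.ofComplNotMemIff F ?_, ?_⟩
  · intro A
    rw [hF, hF, compl_compl]
    constructor
    · intro h
      exact (hm A).resolve_left h
    · intro h h'
      apply hp
      have := hu _ _ h' h
      rwa [union_compl_self] at this
  · intro A
    exact Iff.rfl

theorem half_unique (D₁ D₂ : Set (Set (Set ℕ)))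
    (h₁m : ∀ K ∈ D₁, IsMaxIdeal K) (h₁d : IsDiscreteSubset (DualSet D₁))
    (h₂m : ∀ K ∈ D₂, IsMaxIdeal K) (heq : ⋂₀ D₁ = ⋂₀ D₂) : D₁ ⊆ D₂ := by
  intro K hK
  have hKm := h₁m K hK
  obtain ⟨U, hU⟩ := exists_dualUltra hKm
  obtain ⟨V, hV, hVU⟩ := h₁d U ⟨K, hK, hU⟩
  have hUV : U ∈ V := by
    have : U ∈ V ∩ DualSet D₁ := by rw [hVU]; rfl
    exact this.1
  obtain ⟨W, ⟨A, rfl⟩, hUW, hWV⟩ :=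
    ultrafilterBasis_is_basis.exists_subset_of_mem_open hUV hV
  have hAU : A ∈ U := hUW
  have key : ∀ K' ∈ D₁, Aᶜ ∈ K' → K' = K := by
    intro K' hK' hA
    obtain ⟨U', hU'⟩ := exists_dualUltra (h₁m K' hK')
    have h1 : U' ∈ V := hWV ((hU' A).2 hA)
    have h2 : U' ∈ V ∩ DualSet D₁ := ⟨h1, K', hK', hU'⟩
    rw [hVU] at h2
    have h3 : U' = U := h2
    subst h3
    ext B
    have e1 := hU Bᶜ
    have e2 := hU' Bᶜ
    rw [compl_compl] at e1 e2
    exact e2.symm.trans e1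
  obtain ⟨⟨⟨hf, hs, hu⟩, hp⟩, hm⟩ := hKm
  have hAK : A ∉ K := by
    intro h
    have := hu _ _ h ((hU A).1 hAU)
    rw [union_compl_self] at this
    exact hp this
  have hA2 : A ∉ ⋂₀ D₂ := by
    rw [← heq]
    exact fun h => hAK (h K hK)
  simp only [mem_sInter, not_forall] at hA2
  obtain ⟨L, hL, hAL⟩ := hA2
  obtain ⟨⟨⟨hf', hs', hu'⟩, hp'⟩, hm'⟩ := h₂m L hL
  have hLK : L ⊆ K := by
    intro B hB
    have h1 : A \ B ∉ ⋂₀ D₁ := by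
      rw [heq]
      intro h
      exact hAL (hs' _ _ (fun x hx => by by_cases hb : x ∈ B <;> simp [hx, hb]) (hu' _ _ (h L hL) hB))
    simp only [mem_sInter, not_forall] at h1
    obtain ⟨K', hK', h2⟩ := h1
    obtain ⟨⟨⟨_, hs'', _⟩, _⟩, hm''⟩ := h₁m K' hK'
    have h3 : K' = K :=
      key K' hK' ((hm'' A).resolve_left fun h => h2 (hs'' _ _ sdiff_subset h))
    subst h3
    exact hs B (A \ B)ᶜ (fun x hx h => h.2 hx) ((hm _).resolve_left h2)
  have : K = L := by
    refine Subset.antisymm (fun C hC => (hm' C).resolve_right fun h => hp ?_) hLK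
    have := hu _ _ hC (hLK h)
    rwa [union_compl_self] at this
  rwa [this]

/-- A strongly ω-maximal ideal admits a unique representation by a discrete collection of
maximal ideals: two countably infinite discrete collections of pairwise distinct maximal
ideals with the same intersection coincide. -/
theorem unique_discrete_representation (D₁ D₂ : Set (Set (Set ℕ)))
    (h₁c : D₁.Countable) (h₁i : D₁.Infinite) (h₁m : ∀ K ∈ D₁, IsMaxIdeal K)
    (h₁d : IsDiscreteSubset (DualSet D₁))
    (h₂c : D₂.Countable) (h₂i : D₂.Infinite) (h₂m : ∀ K ∈ D₂, IsMaxIdeal K)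
    (h₂d : IsDiscreteSubset (DualSet D₂))
    (heq : ⋂₀ D₁ = ⋂₀ D₂) : D₁ = D₂ := by
  exact Subset.antisymm (half_unique D₁ D₂ h₁m h₁d h₂m heq)
    (half_unique D₂ D₁ h₂m h₂d h₁m heq.symm)
end

section
/- Let I be an ideal on ℕ. Then I = ⋂ E for some countably infinite collection E of pairwise distinct maximal ideals on ℕ whose set of dual ultrafilters E* is a scattered subspace of Ultrafilter ℕ (every nonempty subset of E* has a point isolated in that subset) if and only if I is strongly ω-maximal. -/
open Set

/-- A set is scattered if every nonempty subset of it has a point isolated in that subset. -/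
def IsScatteredSubset {X : Type*} [TopologicalSpace X] (S : Set X) : Prop :=
  ∀ T ⊆ S, T.Nonempty → ∃ x ∈ T, ∃ V : Set X, IsOpen V ∧ V ∩ T = {x}

theorem exists_dual {K : Set (Set ℕ)} (hK : IsMaxIdeal K) : ∃ U : Ultrafilter ℕ, IsDualUltra K U := by
  obtain ⟨⟨⟨hf, hs, hu⟩, hp⟩, hm⟩ := hK
  let F : Filter ℕ :=
    { sets := {A | Aᶜ ∈ K}
      univ_sets := by
        show (Set.univ : Set ℕ)ᶜ ∈ K
        exact hf _ (by simp)
      sets_of_superset := by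
        intro A B hA hAB
        exact hs _ _ (Set.compl_subset_compl.2 hAB) hA
      inter_sets := by
        intro A B hA hB
        show (A ∩ B)ᶜ ∈ K
        rw [Set.compl_inter]
        exact hu _ _ hA hB }
  have hF : ∀ A : Set ℕ, A ∈ F ↔ Aᶜ ∈ K := fun A => Iff.rfl
  refine ⟨Ultrafilter.ofComplNotMemIff F ?_, fun A => hF A⟩
  intro A
  rw [hF, hF, compl_compl]
  constructor
  · intro h
    exact (hm A).resolve_left h
  · intro h h'
    apply hp
    have := hu _ _ h h'
    rwa [Set.compl_union_self] at this

theorem dual_unique {K : Set (Set ℕ)} {U V : Ultrafilter ℕ} (hU : IsDualUltra K U)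
    (hV : IsDualUltra K V) : U = V := by
  ext A
  rw [hU A, hV A]

theorem dual_unique_ideal {K L : Set (Set ℕ)} {U : Ultrafilter ℕ} (hK : IsDualUltra K U)
    (hL : IsDualUltra L U) : K = L := by
  ext A
  have h1 := hK Aᶜ
  have h2 := hL Aᶜ
  rw [compl_compl] at h1 h2
  rw [← h1, ← h2]

theorem dual_mem {K : Set (Set ℕ)} {U : Ultrafilter ℕ} (hK : IsDualUltra K U) (A : Set ℕ) :
    A ∈ K ↔ A ∉ U := by
  have h1 := hK Aᶜ
  rw [compl_compl] at h1
  rw [← h1, Ultrafilter.compl_mem_iff_notMem]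

theorem scattered_dense {X : Type*} [TopologicalSpace X] {S : Set X} (hS : IsScatteredSubset S)
    {V : Set X} (hV : IsOpen V) (hne : (V ∩ S).Nonempty) :
    ∃ y ∈ V ∩ S, ∃ W : Set X, IsOpen W ∧ W ∩ S = {y} := by
  obtain ⟨y, hy, W, hW, hWy⟩ := hS (V ∩ S) Set.inter_subset_right hne
  exact ⟨y, hy, W ∩ V, hW.inter hV, by rw [Set.inter_assoc, hWy]⟩

theorem discrete_scattered {X : Type*} [TopologicalSpace X] {S : Set X}
    (hS : IsDiscreteSubset S) : IsScatteredSubset S := by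
  intro T hT ⟨x, hx⟩
  obtain ⟨V, hV, hVx⟩ := hS x (hT hx)
  refine ⟨x, hx, V, hV, ?_⟩
  apply Set.Subset.antisymm
  · rw [← hVx]
    exact Set.inter_subset_inter_right _ hT
  · have : x ∈ V ∩ S := by rw [hVx]; rfl
    rintro y rfl
    exact ⟨this.1, hx⟩

/-- An ideal is the intersection of a countably infinite collection of pairwise distinct
maximal ideals whose dual ultrafilters form a scattered subspace of `Ultrafilter ℕ`
iff it is strongly ω-maximal. -/
theorem scattered_representation_iff_stronglyOmegaMax (I : Set (Set ℕ)) (hI : IsIdeal I) :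
    (∃ E : Set (Set (Set ℕ)), E.Countable ∧ E.Infinite ∧ (∀ K ∈ E, IsMaxIdeal K) ∧
      IsScatteredSubset (DualSet E) ∧ I = ⋂₀ E) ↔ StronglyOmegaMax I := by
  constructor
  · rintro ⟨E, hc, hinf, hmax, hsc, rfl⟩
    let T : Set (Ultrafilter ℕ) :=
      {y | y ∈ DualSet E ∧ ∃ W : Set (Ultrafilter ℕ), IsOpen W ∧ W ∩ DualSet E = {y}}
    have hTS : T ⊆ DualSet E := fun y hy => hy.1
    have hid : ∀ U ∈ DualSet E, {A : Set ℕ | Aᶜ ∈ U} ∈ E ∧ IsDualUltra {A : Set ℕ | Aᶜ ∈ U} U := by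
      rintro U ⟨K, hK, hKU⟩
      have hd : IsDualUltra {A : Set ℕ | Aᶜ ∈ U} U := by
        intro A
        simp
      have := dual_unique_ideal hKU hd
      exact ⟨this ▸ hK, hd⟩
    have hSc : (DualSet E).Countable := by
      refine Set.MapsTo.countable_of_injOn (f := fun U : Ultrafilter ℕ => {A : Set ℕ | Aᶜ ∈ U})
        (t := E) (fun U hU => (hid U hU).1) ?_ hc
      intro U hU V hV h
      have h1 := (hid U hU).2
      have h2 := (hid V hV).2
      simp only at h
      rw [h] at h1
      exact dual_unique h1 h2
    have hSinf : (DualSet E).Infinite := by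
      intro hfin
      apply hinf
      refine (hfin.image (fun U : Ultrafilter ℕ => {A : Set ℕ | Aᶜ ∈ U})).subset ?_
      intro K hK
      obtain ⟨U, hU⟩ := exists_dual (hmax K hK)
      have hUS : U ∈ DualSet E := ⟨K, hK, hU⟩
      exact ⟨U, hUS, dual_unique_ideal (hid U hUS).2 hU⟩
    have hTinf : T.Infinite := by
      intro hfin
      apply hSinf
      refine hfin.subset ?_
      intro x hx
      by_contra hxT
      obtain ⟨y, hy, hyW⟩ := scattered_dense hsc hfin.isClosed.isOpen_compl ⟨x, hxT, hx⟩
      exact hy.1 ⟨hy.2, hyW⟩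
    have hTc : T.Countable := hSc.mono hTS
    haveI : Infinite T := hTinf.to_subtype
    haveI : Countable T := hTc.to_subtype
    obtain ⟨e⟩ : Nonempty (ℕ ≃ T) := nonempty_equiv_of_countable
    have hr : Set.range (fun n => (e n : Ultrafilter ℕ)) = T := by
      ext y
      constructor
      · rintro ⟨n, rfl⟩
        exact (e n).2
      · intro hy
        exact ⟨e.symm ⟨y, hy⟩, by simp⟩
    have hd := fun n => hid (e n) (hTS (e n).2)
    refine ⟨fun n => {A : Set ℕ | Aᶜ ∈ (e n : Ultrafilter ℕ)}, fun n => hmax _ (hd n).1, ?_,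
      ⟨fun n => (e n : Ultrafilter ℕ), fun n => (hd n).2, ?_⟩, ?_⟩
    · intro m n hmn h
      apply hmn
      apply e.injective
      apply Subtype.ext
      have h1 := (hd m).2
      have h2 := (hd n).2
      simp only at h
      rw [h] at h1
      exact dual_unique h1 h2
    · rw [hr]
      rintro y ⟨hyS, W, hW, hWy⟩
      have hyT : y ∈ T := ⟨hyS, W, hW, hWy⟩
      have hyW : y ∈ W ∩ DualSet E := by rw [hWy]; rfl
      refine ⟨W, hW, Set.Subset.antisymm ?_ ?_⟩
      · rw [← hWy]
        exact Set.inter_subset_inter_right _ hTS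
      · rintro z rfl
        exact ⟨hyW.1, hyT⟩
    · ext A
      rw [Set.mem_sInter, Set.mem_iInter]
      constructor
      · intro h n
        exact h _ (hd n).1
      · intro h K hK
        obtain ⟨U, hU⟩ := exists_dual (hmax K hK)
        rw [dual_mem hU]
        intro hAU
        obtain ⟨y, hy, hyW⟩ := scattered_dense hsc (ultrafilter_isOpen_basic A)
          ⟨U, hAU, K, hK, hU⟩
        have hyT : y ∈ T := ⟨hy.2, hyW⟩
        rw [← hr] at hyT
        obtain ⟨n, rfl⟩ := hyT
        exact (dual_mem (hd n).2 A).1 (h n) hy.1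
  · rintro ⟨J, hmax, hne, ⟨U, hU, hdisc⟩, rfl⟩
    refine ⟨Set.range J, Set.countable_range J, Set.infinite_range_of_injective ?_, ?_, ?_, ?_⟩
    · intro m n h
      by_contra hmn
      exact hne m n hmn h
    · rintro _ ⟨n, rfl⟩
      exact hmax n
    · have : DualSet (Set.range J) = Set.range U := by
        ext V
        constructor
        · rintro ⟨_, ⟨n, rfl⟩, hV⟩
          exact ⟨n, dual_unique (hU n) hV⟩
        · rintro ⟨n, rfl⟩
          exact ⟨J n, ⟨n, rfl⟩, hU n⟩
      rw [this]
      exact discrete_scattered hdisc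
    · rw [Set.sInter_range]
end

section
/- Let I ⊊ J be ideals on ℕ and let k be a positive integer. Then I is k-maximal in J if and only if there exists an (I,J,k)-family. -/
open Set

/-- `I` is `k`-maximal in `J`: `I` is the intersection of `J` with `k` pairwise distinct
maximal ideals, none of which contains `J`. -/
def kMaximalIn (I J : Set (Set ℕ)) (k : ℕ) : Prop :=
  ∃ L : Fin k → Set (Set ℕ), Function.Injective L ∧ (∀ i, IsMaxIdeal (L i)) ∧
    (∀ i, ¬ J ⊆ L i) ∧ I = (⋂ i, L i) ∩ J

/-- An `(I,J,k)`-family: pairwise disjoint sets `A_1, …, A_k ∈ J \ I` almost covering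
`J \ I`, on each of which `I` restricts to a maximal ideal. -/
def IJkFamily (I J : Set (Set ℕ)) (k : ℕ) (A : Fin k → Set ℕ) : Prop :=
  (∀ i, A i ∈ J ∧ A i ∉ I) ∧
  (Pairwise fun i j => Disjoint (A i) (A j)) ∧
  (∀ B ∈ J, B ∉ I → B \ (⋃ i, A i) ∈ I) ∧
  (∀ i, A i ∉ I ∧ ∀ C ⊆ A i, C ∈ I ∨ A i \ C ∈ I)


lemma ideal_iUnion {I : Set (Set ℕ)} (hI : IsIdeal I) {k : ℕ} (f : Fin k → Set ℕ)
    (h : ∀ i, f i ∈ I) : (⋃ i, f i) ∈ I := by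
  induction k with
  | zero => exact hI.1 _ (by simp)
  | succ n ih =>
    refine hI.2.1 _ _ ?_ (hI.2.2 _ _ (h 0) (ih (fun i => f i.succ) fun i => h _))
    intro x hx
    obtain ⟨i, hi⟩ := mem_iUnion.1 hx
    induction i using Fin.cases with
    | zero => exact Or.inl hi
    | succ j => exact Or.inr (mem_iUnion.2 ⟨j, hi⟩)

/-- a set not in an ideal, minus a member, is not in the ideal -/
lemma ideal_diff {I : Set (Set ℕ)} (hI : IsIdeal I) {A B : Set ℕ}
    (hA : A ∉ I) (hB : B ∈ I) : A \ B ∉ I := fun h =>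
  hA (hI.2.1 _ _ (by intro x hx; by_cases hb : x ∈ B <;> simp [hx, hb]) (hI.2.2 _ _ h hB))

lemma max_sep {L M : Set (Set ℕ)} (hL : IsMaxIdeal L) (hM : IsMaxIdeal M) (h : L ≠ M) :
    ∃ T ∈ L, Tᶜ ∈ M := by
  by_contra hc
  push Not at hc
  have h1 : L ⊆ M := fun T hT => (hM.2 T).resolve_right (hc T hT)
  refine h (h1.antisymm fun T hT => (hL.2 T).resolve_right fun hT' => ?_)
  exact hc _ hT' (by simpa using hT)

lemma forward (I J : Set (Set ℕ)) (hJ : IsIdeal J) (k : ℕ) (h : kMaximalIn I J k) :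
    ∃ A : Fin k → Set ℕ, IJkFamily I J k A := by
  obtain ⟨L, hinj, hL, hJL, rfl⟩ := h
  have hid : ∀ i, IsIdeal (L i) := fun i => (hL i).1.1
  have hB : ∀ i, ∃ B ∈ J, B ∉ L i := fun i => not_subset.1 (hJL i)
  choose B hBJ hBL using hB
  have hT : ∀ i j, ∃ T ∈ L i, i ≠ j → Tᶜ ∈ L j := by
    intro i j
    by_cases hij : i = j
    · exact ⟨∅, (hid i).1 _ finite_empty, fun h => absurd hij h⟩
    · obtain ⟨T, h1, h2⟩ := max_sep (hL i) (hL j) (fun h => hij (hinj h))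
      exact ⟨T, h1, fun _ => h2⟩
  choose T hTi hTj using hT
  let D : Fin k → Set ℕ := fun i => B i \ ⋃ j, T i j
  have hDi : ∀ i, D i ∉ L i := fun i => ideal_diff (hid i) (hBL i) (ideal_iUnion (hid i) _ (hTi i))
  have hDj : ∀ i j, i ≠ j → D i ∈ L j := fun i j hij =>
    (hid j).2.1 _ _ (fun x hx hx' => hx.2 (mem_iUnion.2 ⟨j, hx'⟩)) (hTj i j hij)
  let A : Fin k → Set ℕ := fun i => D i \ ⋃ j, (if j = i then ∅ else D j)
  have hAi : ∀ i, A i ∉ L i := fun i => by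
    refine ideal_diff (hid i) (hDi i) (ideal_iUnion (hid i) _ fun j => ?_)
    split_ifs with hji
    · exact (hid i).1 _ finite_empty
    · exact hDj j i hji
  have hAD : ∀ i, A i ⊆ D i := fun i => sdiff_subset
  have hAj : ∀ i j, i ≠ j → A i ∈ L j := fun i j hij => (hid j).2.1 _ _ (hAD i) (hDj i j hij)
  have hAJ : ∀ i, A i ∈ J := fun i => hJ.2.1 _ _ ((hAD i).trans sdiff_subset) (hBJ i)
  have hAI : ∀ i, A i ∉ (⋂ i, L i) ∩ J := fun i h => hAi i (mem_iInter.1 h.1 i)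
  have hcomp : ∀ i, (A i)ᶜ ∈ L i := fun i => ((hL i).2 _).resolve_left (hAi i)
  refine ⟨A, fun i => ⟨hAJ i, hAI i⟩, ?_, ?_, fun i => ⟨hAI i, ?_⟩⟩
  · intro i j hij
    refine disjoint_left.2 fun x hx hx' => hx.2 (mem_iUnion.2 ⟨j, ?_⟩)
    rw [if_neg hij.symm]
    exact hAD j hx'
  · intro C hC _
    refine ⟨mem_iInter.2 fun i => ?_, hJ.2.1 _ _ sdiff_subset hC⟩
    exact (hid i).2.1 _ _ (fun x hx hx' => hx.2 (mem_iUnion.2 ⟨i, hx'⟩)) (hcomp i)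
  · intro C hC
    have key : ∀ E ⊆ A i, E ∈ L i → E ∈ (⋂ i, L i) ∩ J := fun E hE hEi => by
      refine ⟨mem_iInter.2 fun j => ?_, hJ.2.1 _ _ hE (hAJ i)⟩
      by_cases hij : i = j
      · exact hij ▸ hEi
      · exact (hid j).2.1 _ _ hE (hAj i j hij)
    rcases (hL i).2 C with h | h
    · exact Or.inl (key C hC h)
    · exact Or.inr (key _ sdiff_subset ((hid i).2.1 _ _ (fun x hx => hx.2) h))

lemma backward (I J : Set (Set ℕ)) (hI : IsIdeal I) (hIJ : I ⊆ J) (k : ℕ)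
    (A : Fin k → Set ℕ) (h : IJkFamily I J k A) : kMaximalIn I J k := by
  obtain ⟨h1, h2, h3, h4⟩ := h
  have hself : ∀ i, A i ∩ A i ∉ I := fun i => by simpa using (h1 i).2
  refine ⟨fun i => {C | C ∩ A i ∈ I}, ?_, ?_, ?_, ?_⟩
  · intro i j hij
    by_contra hne
    have : A i ∈ {C | C ∩ A j ∈ I} := by
      change A i ∩ A j ∈ I
      rw [(h2 hne).inter_eq]
      exact hI.1 _ finite_empty
    exact hself i ((Set.ext_iff.1 hij (A i)).2 this)
  · refine fun i => ⟨⟨⟨?_, ?_, ?_⟩, ?_⟩, ?_⟩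
    · exact fun C hC => hI.1 _ (hC.inter_of_left _)
    · exact fun C E hCE hE => hI.2.1 _ _ (inter_subset_inter_left _ hCE) hE
    · intro C E hC hE
      change (C ∪ E) ∩ A i ∈ I
      rw [union_inter_distrib_right]
      exact hI.2.2 _ _ hC hE
    · intro h
      exact (h1 i).2 (by simpa using h)
    · intro C
      refine ((h4 i).2 (C ∩ A i) inter_subset_right).imp id fun h => ?_
      have hs : Cᶜ ∩ A i ⊆ A i \ (C ∩ A i) := fun x hx => ⟨hx.2, fun hx' => hx.1 hx'.1⟩
      exact hI.2.1 _ _ hs h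
  · exact fun i h => hself i (h (h1 i).1)
  · ext C
    constructor
    · exact fun hC => ⟨mem_iInter.2 fun i => hI.2.1 _ _ inter_subset_left hC, hIJ hC⟩
    · rintro ⟨hC, hCJ⟩
      by_contra hCI
      have hu := ideal_iUnion hI (fun i => C ∩ A i) (fun i => mem_iInter.1 hC i)
      refine hCI (hI.2.1 _ _ ?_ (hI.2.2 _ _ (h3 C hCJ hCI) hu))
      rw [← inter_iUnion, sdiff_union_inter]

/-- `I` is `k`-maximal in `J` iff there exists an `(I,J,k)`-family. -/
theorem kMaximalIn_iff_IJkFamily (I J : Set (Set ℕ)) (hI : IsIdeal I) (hJ : IsIdeal J)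
    (hIJ : I ⊆ J) (hne : I ≠ J) (k : ℕ) (hk : 0 < k) :
    kMaximalIn I J k ↔ ∃ A : Fin k → Set ℕ, IJkFamily I J k A :=
  ⟨forward I J hJ k, fun ⟨A, hA⟩ => backward I J hI hIJ k A hA⟩
end

section
/- If I is a strongly ω-maximal ideal on ℕ, then I is complemented, i.e., there exists a continuous linear map P : ℓ∞ → ℓ∞ with P ∘ P = P whose range is c_{0,I}. -/
open Set

/-- ℓ∞, the space of bounded real sequences with the sup norm. -/
noncomputable abbrev ellInf := lp (fun _ : ℕ => ℝ) ⊤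

/-- The indicator sequence of a set `A ⊆ ℕ`, as an element of ℓ∞. -/
noncomputable def chi (A : Set ℕ) : ellInf :=
  ⟨A.indicator (fun _ => (1:ℝ)), by
    apply memℓp_infty
    refine ⟨1, ?_⟩
    rintro r ⟨n, rfl⟩
    by_cases h : n ∈ A <;> simp [h]⟩

/-- `c_{0,I}`: the set of bounded sequences `I`-converging to `0`. -/
def c0I (I : Set (Set ℕ)) : Set ellInf := {x | ∀ ε > 0, {n : ℕ | ε ≤ |x n|} ∈ I}

/-- An ideal `I` is complemented if `c_{0,I}` is the range of a continuous
linear projection on ℓ∞. -/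
def IdealComplemented (I : Set (Set ℕ)) : Prop :=
  ∃ P : ellInf →L[ℝ] ellInf, (∀ x, P (P x) = P x) ∧ Set.range P = c0I I


open Filter Topology in
lemma ultra_lim (U : Ultrafilter ℕ) (x : ellInf) :
    ∃ a : ℝ, |a| ≤ ‖x‖ ∧ Tendsto (fun k => x k) (U : Filter ℕ) (𝓝 a) := by
  have hc : IsCompact (Set.Icc (-‖x‖) ‖x‖) := isCompact_Icc
  have hb : ∀ k, x k ∈ Set.Icc (-‖x‖) ‖x‖ := fun k =>
    abs_le.1 (by simpa using lp.norm_apply_le_norm (by simp) x k)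
  obtain ⟨a, ha, hle⟩ := hc.ultrafilter_le_nhds (U.map (fun k => x k))
    (by
      rw [Filter.le_principal_iff]
      exact Filter.mem_map.2 (Filter.univ_mem' hb))
  exact ⟨a, abs_le.2 ha, hle⟩

open Filter Topology in
lemma sep_sets (U : ℕ → Ultrafilter ℕ) (hinj : Function.Injective U)
    (hd : IsDiscreteSubset (Set.range U)) :
    ∃ f : ℕ → ℕ, ∀ n, ∀ᶠ k in (U n : Filter ℕ), f k = n := by
  have h1 : ∀ n, ∃ A : Set ℕ, A ∈ U n ∧ ∀ m, A ∈ U m → m = n := by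
    intro n
    obtain ⟨V, hV, hVS⟩ := hd (U n) ⟨n, rfl⟩
    have hn : U n ∈ V := by
      have : U n ∈ V ∩ Set.range U := by rw [hVS]; rfl
      exact this.1
    obtain ⟨t, ⟨A, rfl⟩, hA, hAV⟩ :=
      ultrafilterBasis_is_basis.exists_subset_of_mem_open hn hV
    refine ⟨A, hA, fun m hm => ?_⟩
    have : U m ∈ V ∩ Set.range U := ⟨hAV hm, m, rfl⟩
    rw [hVS] at this
    exact hinj this
  choose A hA hA' using h1
  classical
  refine ⟨fun k => if h : ∃ n, k ∈ A n then Nat.find h else 0, fun n => ?_⟩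
  have h2 : ∀ᶠ k in (U n : Filter ℕ), ∀ m ∈ Finset.range n, k ∉ A m := by
    rw [Filter.eventually_all_finset]
    intro m hm
    have : A m ∉ U n := fun h => by
      have := hA' m n h
      simp at hm; omega
    exact Ultrafilter.compl_mem_iff_notMem.2 this
  have h3 : ∀ᶠ k in (U n : Filter ℕ), k ∈ A n := hA n
  filter_upwards [h2, h3] with k hk hk'
  have h : ∃ n, k ∈ A n := ⟨n, hk'⟩
  rw [dif_pos h, Nat.find_eq_iff]
  exact ⟨hk', fun m hm => hk m (by simpa using hm)⟩

open Filter Topology in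
theorem stronglyOmegaMax_complemented (I : Set (Set ℕ)) (h : StronglyOmegaMax I) :
    IdealComplemented I := by
  obtain ⟨J, hJ, hne, ⟨U, hU, hd⟩, rfl⟩ := h
  have hinj : Function.Injective U := by
    intro m n hmn
    by_contra hc
    apply hne m n hc
    ext A
    have h1 := hU m Aᶜ
    have h2 := hU n Aᶜ
    rw [compl_compl] at h1 h2
    rw [← h1, ← h2, hmn]
  obtain ⟨f, hf⟩ := sep_sets U hinj hd
  choose L hLb hL using fun n => ultra_lim (U n)
  have huniq : ∀ n x a, Tendsto (fun k => x k) (U n : Filter ℕ) (𝓝 a) → L n x = a :=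
    fun n x a ha => tendsto_nhds_unique (hL n x) ha
  have hadd : ∀ n x y, L n (x + y) = L n x + L n y := fun n x y =>
    huniq n _ _ (by simpa using (hL n x).add (hL n y))
  have hsmul : ∀ n (c : ℝ) x, L n (c • x) = c * L n x := fun n c x =>
    huniq n _ _ (by simpa using (hL n x).const_mul c)
  let T0 : ellInf →ₗ[ℝ] ellInf :=
    { toFun := fun x => ⟨fun k => L (f k) x, by
        apply memℓp_infty
        refine ⟨‖x‖, ?_⟩
        rintro r ⟨k, rfl⟩
        exact hLb (f k) x⟩
      map_add' := fun x y => by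
        ext k
        exact hadd (f k) x y
      map_smul' := fun c x => by
        ext k
        exact hsmul (f k) c x }
  have hT0 : ∀ x k, T0 x k = L (f k) x := fun x k => rfl
  let T : ellInf →L[ℝ] ellInf := T0.mkContinuous 1 (fun x => by
    rw [one_mul]
    exact lp.norm_le_of_forall_le (norm_nonneg x) (fun k => hLb (f k) x))
  have hT : ∀ x k, T x k = L (f k) x := fun x k => rfl
  have hLT : ∀ n x, L n (T x) = L n x := by
    intro n x
    apply huniq
    apply tendsto_const_nhds.congr'
    filter_upwards [hf n] with k hk
    rw [hT, hk]
  have hLP : ∀ n x, L n (x - T x) = 0 := fun n x =>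
    huniq n _ _ (by
      have := (hL n x).sub (hL n (T x))
      rw [hLT, sub_self] at this
      simpa using this)
  have hz : ∀ x, (∀ n, L n x = 0) → T x = 0 := fun x hx => by
    ext k
    rw [hT, hx]; rfl
  refine ⟨ContinuousLinearMap.id ℝ _ - T, fun x => ?_, ?_⟩
  · have := hz (x - T x) (fun n => hLP n x)
    simp only [ContinuousLinearMap.sub_apply, ContinuousLinearMap.id_apply]
    rw [this, sub_zero]
  · have key : ∀ x, x ∈ c0I (⋂ n, J n) ↔ ∀ n, L n x = 0 := by
      intro x
      have e : ∀ n (ε : ℝ), {k : ℕ | ε ≤ |x k|} ∈ J n ↔ ∀ᶠ k in (U n : Filter ℕ), |x k| < ε := by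
        intro n ε
        have := hU n {k : ℕ | ε ≤ |x k|}ᶜ
        rw [compl_compl] at this
        rw [← this]
        have e2 : {k : ℕ | ε ≤ |x k|}ᶜ = {k : ℕ | |x k| < ε} := by ext k; simp
        rw [e2]; rfl
      constructor
      · intro hx n
        apply huniq
        rw [Metric.tendsto_nhds]
        intro ε hε
        have := (e n ε).1 (Set.mem_iInter.1 (hx ε hε) n)
        simpa [Real.dist_eq] using this
      · intro hx ε hε
        refine Set.mem_iInter.2 fun n => (e n ε).2 ?_
        have := hL n x
        rw [hx n, Metric.tendsto_nhds] at this
        simpa [Real.dist_eq] using this ε hε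
    ext x
    rw [key]
    constructor
    · rintro ⟨y, rfl⟩ n
      exact hLP n y
    · intro hx
      refine ⟨x, ?_⟩
      simp only [ContinuousLinearMap.sub_apply, ContinuousLinearMap.id_apply]
      rw [hz x hx, sub_zero]
end

section
/- Let I be an ideal on ℕ and let I^ω be the ideal on ℕ × ℕ defined by A ∈ I^ω if and only if {m : (n, m) ∈ A} ∈ I for every n ∈ ℕ. Then I is complemented (there is a continuous linear map P : ℓ∞ → ℓ∞ with P ∘ P = P and range c_{0,I}) if and only if I^ω is complemented in ℓ∞(ℕ × ℕ) (there is a continuous linear map Q : ℓ∞(ℕ × ℕ) → ℓ∞(ℕ × ℕ) with Q ∘ Q = Q and range c_{0,I^ω}, where c_{0,I^ω} = {x ∈ ℓ∞(ℕ × ℕ) : ∀ ε > 0, {p : ε ≤ |x p|} ∈ I^ω}). -/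
open Set

/-- The ideal `I^ω` on `ℕ × ℕ`: `A ∈ I^ω` iff every vertical section of `A` is in `I`. -/
def idealOmega (I : Set (Set ℕ)) : Set (Set (ℕ × ℕ)) :=
  {A | ∀ n : ℕ, {m : ℕ | (n, m) ∈ A} ∈ I}

/-- ℓ∞(ℕ × ℕ). -/
noncomputable abbrev ellInf2 := lp (fun _ : ℕ × ℕ => ℝ) ⊤

/-- `c_{0,K}` inside ℓ∞(ℕ × ℕ) for a collection `K` of subsets of `ℕ × ℕ`. -/
def c0I2 (K : Set (Set (ℕ × ℕ))) : Set ellInf2 :=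
  {x | ∀ ε > 0, {p : ℕ × ℕ | ε ≤ |x p|} ∈ K}


/-- A uniformly bounded family of functionals gives an operator into ℓ∞. -/
noncomputable def mkOp {E ι : Type*} [NormedAddCommGroup E] [NormedSpace ℝ E]
    (f : ι → E →ₗ[ℝ] ℝ) (C : ℝ) (hC : 0 ≤ C) (h : ∀ i x, |f i x| ≤ C * ‖x‖) :
    E →L[ℝ] lp (fun _ : ι => ℝ) ⊤ :=
  LinearMap.mkContinuous
    { toFun := fun x => ⟨fun i => f i x, memℓp_infty ⟨C * ‖x‖, by
        rintro r ⟨i, rfl⟩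
        exact h i x⟩⟩
      map_add' := fun x y => by
        ext i
        exact (f i).map_add x y
      map_smul' := fun c x => by
        ext i
        exact (f i).map_smul c x } C
    (fun x => lp.norm_le_of_forall_le (mul_nonneg hC (norm_nonneg x)) (fun i => h i x))

theorem mkOp_apply {E ι : Type*} [NormedAddCommGroup E] [NormedSpace ℝ E]
    (f : ι → E →ₗ[ℝ] ℝ) (C : ℝ) (hC : 0 ≤ C) (h : ∀ i x, |f i x| ≤ C * ‖x‖) (x : E) (i : ι) :
    mkOp f C hC h x i = f i x := rfl

/-- Coordinate functional. -/
noncomputable def coordL {ι : Type*} (i : ι) : lp (fun _ : ι => ℝ) ⊤ →ₗ[ℝ] ℝ where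
  toFun x := x i
  map_add' _ _ := rfl
  map_smul' _ _ := rfl

theorem coordL_le {ι : Type*} (i : ι) (x : lp (fun _ : ι => ℝ) ⊤) : |coordL i x| ≤ ‖x‖ :=
  lp.norm_apply_le_norm (by simp) x i

noncomputable def rowOp (n : ℕ) : ellInf2 →L[ℝ] ellInf :=
  mkOp (fun m => coordL (n, m)) 1 zero_le_one
    (fun m x => by rw [one_mul]; exact coordL_le (n, m) x)

theorem rowOp_apply (n m : ℕ) (x : ellInf2) : rowOp n x m = x (n, m) := rfl

theorem rowOp_le (n : ℕ) (x : ellInf2) : ‖rowOp n x‖ ≤ ‖x‖ :=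
  lp.norm_le_of_forall_le (norm_nonneg x) (fun m => coordL_le (n, m) x)

noncomputable def embOp : ellInf →L[ℝ] ellInf2 :=
  mkOp (fun p => if p.1 = 0 then coordL p.2 else 0) 1 zero_le_one
    (fun p x => by
      rw [one_mul]
      by_cases h : p.1 = 0
      · simpa [h] using coordL_le p.2 x
      · simp [h])

theorem rowOp_embOp_zero (x : ellInf) : rowOp 0 (embOp x) = x := by
  ext m
  rw [rowOp_apply, embOp, mkOp_apply]
  rfl

theorem rowOp_embOp_ne (n : ℕ) (hn : n ≠ 0) (x : ellInf) : rowOp n (embOp x) = 0 := by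
  ext m
  rw [rowOp_apply, embOp, mkOp_apply]
  simp [hn]

noncomputable def omegaOp (P : ellInf →L[ℝ] ellInf) : ellInf2 →L[ℝ] ellInf2 :=
  mkOp (fun p => (coordL p.2).comp ((P.comp (rowOp p.1)).toLinearMap)) ‖P‖ (norm_nonneg P)
    (fun p x => (coordL_le p.2 _).trans
      ((P.le_opNorm _).trans (mul_le_mul_of_nonneg_left (rowOp_le p.1 x) (norm_nonneg P))))

theorem rowOp_omegaOp (P : ellInf →L[ℝ] ellInf) (n : ℕ) (x : ellInf2) :
    rowOp n (omegaOp P x) = P (rowOp n x) := rfl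

theorem ext_rows {x y : ellInf2} (h : ∀ n, rowOp n x = rowOp n y) : x = y := by
  ext p
  have := congrArg (fun z : ellInf => z p.2) (h p.1)
  exact this

theorem mem_c0I2_iff (I : Set (Set ℕ)) (x : ellInf2) :
    x ∈ c0I2 (idealOmega I) ↔ ∀ n, rowOp n x ∈ c0I I :=
  ⟨fun h n ε hε => h ε hε n, fun h ε hε n => h n ε hε⟩

/-- `I` is complemented iff `I^ω` is complemented in ℓ∞(ℕ × ℕ). -/
theorem complemented_iff_omega_complemented (I : Set (Set ℕ)) (hI : IsIdeal I) :
    IdealComplemented I ↔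
      ∃ Q : ellInf2 →L[ℝ] ellInf2, (∀ x, Q (Q x) = Q x) ∧
        Set.range Q = c0I2 (idealOmega I) := by
  constructor
  · rintro ⟨P, hP, hr⟩
    refine ⟨omegaOp P, fun x => ext_rows fun n => ?_, ?_⟩
    · simp only [rowOp_omegaOp, hP]
    · ext x
      rw [mem_c0I2_iff]
      constructor
      · rintro ⟨y, rfl⟩ n
        rw [rowOp_omegaOp, ← hr]
        exact ⟨_, rfl⟩
      · intro h
        refine ⟨x, ext_rows fun n => ?_⟩
        rw [rowOp_omegaOp]
        have hn := h n
        rw [← hr] at hn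
        obtain ⟨y, hy⟩ := hn
        rw [← hy, hP]
  · rintro ⟨Q, hQ, hr⟩
    have hmem : ∀ x, rowOp 0 (Q (embOp x)) ∈ c0I I := fun x =>
      (mem_c0I2_iff I _).1 (hr ▸ ⟨_, rfl⟩) 0
    have hfix : ∀ x ∈ c0I I, rowOp 0 (Q (embOp x)) = x := by
      intro x hx
      have : embOp x ∈ c0I2 (idealOmega I) := by
        rw [mem_c0I2_iff]
        intro n
        by_cases hn : n = 0
        · rw [hn, rowOp_embOp_zero]; exact hx
        · rw [rowOp_embOp_ne n hn]
          intro ε hε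
          apply hI.1
          convert Set.finite_empty
          ext m
          simpa using hε
      rw [← hr] at this
      obtain ⟨y, hy⟩ := this
      rw [← hy, hQ, hy, rowOp_embOp_zero]
    refine ⟨(rowOp 0).comp (Q.comp embOp), fun x => hfix _ (hmem x), ?_⟩
    ext x
    exact ⟨fun ⟨y, hy⟩ => hy ▸ hmem y, fun h => ⟨x, hfix x h⟩⟩
end

section
/- Let I ⊊ J be ideals on ℕ and let k be a positive integer. If J is complemented and I is k-maximal in J, then I is complemented. -/
open Set

/-- Restricting the range of a projection by the kernel of a continuous functional. -/
theorem proj_inter_ker (S : Set ellInf)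
    (h : ∃ P : ellInf →L[ℝ] ellInf, (∀ x, P (P x) = P x) ∧ Set.range P = S)
    (φ : ellInf →L[ℝ] ℝ) :
    ∃ P : ellInf →L[ℝ] ellInf, (∀ x, P (P x) = P x) ∧ Set.range P = S ∩ {x | φ x = 0} := by
  obtain ⟨P, hP, rfl⟩ := h
  by_cases hz : ∀ x, φ (P x) = 0
  · refine ⟨P, hP, ?_⟩
    ext y
    constructor
    · rintro ⟨x, rfl⟩
      exact ⟨⟨x, rfl⟩, hz x⟩
    · exact fun h => h.1
  · push Not at hz
    obtain ⟨b, hb⟩ := hz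
    obtain ⟨a, ha, hPa⟩ : ∃ a, φ a = 1 ∧ P a = a := by
      refine ⟨(φ (P b))⁻¹ • P b, ?_, ?_⟩
      · rw [map_smul, smul_eq_mul, inv_mul_cancel₀ hb]
      · rw [map_smul, hP]
    have hQ : ∀ x, (P - (φ.comp P).smulRight a) x = P x - φ (P x) • a := fun x => by simp
    refine ⟨P - (φ.comp P).smulRight a, ?_, ?_⟩
    · intro x
      have h1 : P (P x - φ (P x) • a) = P x - φ (P x) • a := by
        rw [map_sub, map_smul, hP, hPa]
      rw [hQ x, hQ, h1, map_sub, map_smul, ha]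
      simp
    · ext y
      constructor
      · rintro ⟨x, rfl⟩
        rw [hQ]
        refine ⟨⟨P x - φ (P x) • a, ?_⟩, ?_⟩
        · rw [map_sub, map_smul, hP, hPa]
        · simp [ha]
      · rintro ⟨⟨x, rfl⟩, h0⟩
        refine ⟨P x, ?_⟩
        have h0' : φ (P x) = 0 := h0
        rw [hQ, hP, h0']
        simp

theorem exists_limit_functional (L : Set (Set ℕ)) (hL : IsMaxIdeal L) :
    ∃ φ : ellInf →L[ℝ] ℝ, ∀ x, φ x = 0 ↔ x ∈ c0I L := by
  obtain ⟨⟨⟨hfin, hsub, hun⟩, hprop⟩, hmax⟩ := hL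
  let F : Filter ℕ :=
    { sets := {A | Aᶜ ∈ L}
      univ_sets := by
        change (Set.univ : Set ℕ)ᶜ ∈ L
        rw [Set.compl_univ]; exact hfin _ Set.finite_empty
      sets_of_superset := fun {A B} hA hAB => hsub _ _ (Set.compl_subset_compl.2 hAB) hA
      inter_sets := fun {A B} hA hB => by
        change (A ∩ B)ᶜ ∈ L
        rw [Set.compl_inter]; exact hun _ _ hA hB }
  have hF : ∀ A, A ∈ F ↔ Aᶜ ∈ L := fun A => Iff.rfl
  let U : Ultrafilter ℕ := Ultrafilter.ofComplNotMemIff F (fun s => by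
    rw [hF, hF, compl_compl]
    constructor
    · intro h; exact (hmax s).resolve_left h
    · intro h h'
      apply hprop
      have := hun _ _ h' h
      rwa [Set.union_compl_self] at this)
  have hU : ∀ A, A ∈ (U : Filter ℕ) ↔ Aᶜ ∈ L := fun A => Iff.rfl
  have hex : ∀ x : ellInf, ∃ a : ℝ, |a| ≤ ‖x‖ ∧ Filter.Tendsto (fun n => x n) U (nhds a) := by
    intro x
    have hb : ∀ n, |x n| ≤ ‖x‖ := fun n => by
      simpa using lp.norm_apply_le_norm ENNReal.top_ne_zero x n
    obtain ⟨a, ha, hle⟩ := (isCompact_Icc (a := -‖x‖) (b := ‖x‖)).ultrafilter_le_nhds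
      (U.map (fun n => x n)) (by
        rw [Filter.le_principal_iff]
        rw [Ultrafilter.coe_map, Filter.mem_map]
        exact Filter.univ_mem' fun n => abs_le.1 (hb n))
    exact ⟨a, abs_le.2 ha, hle⟩
  choose f hf hlim using hex
  let φ : ellInf →ₗ[ℝ] ℝ :=
    { toFun := f
      map_add' := fun x y => tendsto_nhds_unique (hlim (x + y)) ((hlim x).add (hlim y))
      map_smul' := fun c x => tendsto_nhds_unique (hlim (c • x)) ((hlim x).const_mul c) }
  refine ⟨φ.mkContinuous 1 (fun x => by rw [one_mul]; exact hf x), fun x => ?_⟩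
  change f x = 0 ↔ _
  have key : x ∈ c0I L ↔ Filter.Tendsto (fun n => x n) U (nhds 0) := by
    rw [Metric.tendsto_nhds]
    refine forall₂_congr fun ε _ => ?_
    change _ ↔ {n | dist (x n) 0 < ε} ∈ (U : Filter ℕ)
    rw [hU]
    have : {n | dist (x n) 0 < ε}ᶜ = {n : ℕ | ε ≤ |x n|} := by
      ext n; simp
    rw [this]
  rw [key]
  constructor
  · intro h; rw [← h]; exact hlim x
  · intro h; exact tendsto_nhds_unique (hlim x) h

/-- If `J` is complemented and `I` is `k`-maximal in `J`, then `I` is complemented. -/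
theorem complemented_of_kMaximalIn (I J : Set (Set ℕ)) (hI : IsIdeal I) (hJ : IsIdeal J)
    (hIJ : I ⊆ J) (hne : I ≠ J) (k : ℕ) (hk : 0 < k)
    (hJc : IdealComplemented J) (hkmax : kMaximalIn I J k) :
    IdealComplemented I := by
  obtain ⟨L, -, hmax, -, rfl⟩ := hkmax
  choose φ hφ using fun i => exists_limit_functional (L i) (hmax i)
  have main : ∀ s : Finset (Fin k), ∃ P : ellInf →L[ℝ] ellInf, (∀ x, P (P x) = P x) ∧
      Set.range P = {x | x ∈ c0I J ∧ ∀ i ∈ s, φ i x = 0} := by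
    intro s
    induction s using Finset.induction_on with
    | empty =>
      obtain ⟨P, hP, hr⟩ := hJc
      refine ⟨P, hP, hr.trans ?_⟩
      ext x
      simp
    | insert i s _ ih =>
      obtain ⟨P, hP, hr⟩ := proj_inter_ker _ ih (φ i)
      refine ⟨P, hP, hr.trans ?_⟩
      ext x
      simp only [Set.mem_inter_iff, Set.mem_ofPred_eq, Finset.forall_mem_insert]
      tauto
  obtain ⟨P, hP, hr⟩ := main Finset.univ
  refine ⟨P, hP, hr.trans ?_⟩
  ext x
  simp only [Set.mem_ofPred_eq, Finset.mem_univ, forall_const, hφ]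
  simp only [c0I, Set.mem_ofPred_eq, Set.mem_inter_iff, Set.mem_iInter]
  constructor
  · exact fun h ε hε => ⟨fun i => h.2 i ε hε, h.1 ε hε⟩
  · exact fun h => ⟨fun ε hε => (h ε hε).2, fun i ε hε => (h ε hε).1 i⟩
end

section
/- Let I be an ideal on ℕ and let A ⊆ B ⊆ ℕ be infinite sets with A ∉ I. If c_{0,I↾B} is complemented in ℓ∞(B) (there is a continuous linear map P : ℓ∞(B) → ℓ∞(B) with P ∘ P = P and range c_{0,I↾B}), then c_{0,I↾A} is complemented in ℓ∞(A). In particular, if I is complemented then c_{0,I↾A} is complemented in ℓ∞(A) for every A ∉ I. -/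
open Set

/-- The restriction of an ideal `I` to a set `A`: `{A ∩ C : C ∈ I}`. -/
def restrictIdeal (I : Set (Set ℕ)) (A : Set ℕ) : Set (Set ℕ) :=
  {B | ∃ C ∈ I, B = A ∩ C}

/-- ℓ∞(A), the bounded real-valued functions on `A ⊆ ℕ`. -/
noncomputable abbrev ellInfOn (A : Set ℕ) := lp (fun _ : ↥A => ℝ) ⊤

/-- `c_{0,I↾A}` inside ℓ∞(A). -/
def c0Restrict (I : Set (Set ℕ)) (A : Set ℕ) : Set (ellInfOn A) :=
  {x | ∀ ε > 0, {n : ℕ | ∃ h : n ∈ A, ε ≤ |x ⟨n, h⟩|} ∈ restrictIdeal I A}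

/-- `I↾A` is complemented in `A`: `c_{0,I↾A}` is the range of a continuous linear
projection on ℓ∞(A). -/
def ComplementedOn (I : Set (Set ℕ)) (A : Set ℕ) : Prop :=
  ∃ P : ellInfOn A →L[ℝ] ellInfOn A, (∀ x, P (P x) = P x) ∧ Set.range P = c0Restrict I A


/-- Pullback of bounded functions along a partial map, extended by zero. -/
noncomputable def pullOpt {α ι : Type} (g : ι → Option α) :
    lp (fun _ : α => ℝ) ⊤ →L[ℝ] lp (fun _ : ι => ℝ) ⊤ :=
  have key : ∀ (x : lp (fun _ : α => ℝ) ⊤) (i : ι), ‖((g i).elim 0 (fun a => x a) : ℝ)‖ ≤ ‖x‖ := by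
    intro x i
    cases h : g i with
    | none => simp
    | some a => simpa using lp.norm_apply_le_norm ENNReal.top_ne_zero x a
  LinearMap.mkContinuous
    { toFun := fun x => ⟨fun i => (g i).elim 0 (fun a => x a), by
        apply memℓp_infty
        refine ⟨‖x‖, ?_⟩
        rintro r ⟨i, rfl⟩
        exact key x i⟩
      map_add' := by
        intro x y
        ext i
        change ((g i).elim 0 (fun a => (x + y) a) : ℝ)
          = (g i).elim 0 (fun a => x a) + (g i).elim 0 (fun a => y a)
        cases g i <;> simp
      map_smul' := by
        intro c x
        ext i
        change ((g i).elim 0 (fun a => (c • x) a) : ℝ) = c * (g i).elim 0 (fun a => x a)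
        cases g i <;> simp } 1 (by
      intro x
      rw [one_mul]
      exact lp.norm_le_of_forall_le (norm_nonneg _) (fun i => key x i))

theorem pullOpt_apply {α ι : Type} (g : ι → Option α) (x : lp (fun _ : α => ℝ) ⊤) (i : ι) :
    pullOpt g x i = (g i).elim 0 (fun a => x a) := rfl

theorem mem_c0Restrict {I : Set (Set ℕ)} (hI : IsIdeal I) (A : Set ℕ) (x : ellInfOn A) :
    x ∈ c0Restrict I A ↔ ∀ ε > 0, {n : ℕ | ∃ h : n ∈ A, ε ≤ |x ⟨n, h⟩|} ∈ I := by
  refine forall₂_congr fun ε _ => ⟨?_, ?_⟩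
  · rintro ⟨C, hC, h⟩
    rw [h]
    exact hI.2.1 _ C Set.inter_subset_right hC
  · intro h
    refine ⟨_, h, ?_⟩
    ext n
    simp only [Set.mem_setOf_eq, Set.mem_inter_iff]
    exact ⟨fun ⟨a, b⟩ => ⟨a, a, b⟩, fun h => h.2⟩

theorem transfer {E F : Type*} [NormedAddCommGroup E] [NormedSpace ℝ E] [NormedAddCommGroup F]
    [NormedSpace ℝ F] (J : E →L[ℝ] F) (R : F →L[ℝ] E) (S : Set E) (T : Set F)
    (hRJ : ∀ x, R (J x) = x) (hJ : ∀ x ∈ S, J x ∈ T) (hR : ∀ y ∈ T, R y ∈ S)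
    (h : ∃ P : F →L[ℝ] F, (∀ x, P (P x) = P x) ∧ Set.range P = T) :
    ∃ P : E →L[ℝ] E, (∀ x, P (P x) = P x) ∧ Set.range P = S := by
  obtain ⟨P, hP, hr⟩ := h
  have hmem : ∀ x, R (P (J x)) ∈ S := fun x => hR _ (hr ▸ ⟨_, rfl⟩)
  have hfix : ∀ x ∈ S, R (P (J x)) = x := by
    intro x hx
    have h1 : J x ∈ Set.range P := hr ▸ hJ x hx
    obtain ⟨z, hz⟩ := h1
    rw [← hz, hP, hz, hRJ]
  refine ⟨R.comp (P.comp J), fun x => hfix _ (hmem x), ?_⟩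
  ext x
  constructor
  · rintro ⟨y, rfl⟩
    exact hmem y
  · intro hx
    exact ⟨x, hfix x hx⟩

/-- If `A ⊆ B` are infinite with `A ∉ I` and `I↾B` is complemented in `B`, then `I↾A` is
complemented in `A`; in particular, if `I` is complemented then `I↾A` is complemented in `A`. -/
theorem complementedOn_of_subset (I : Set (Set ℕ)) (hI : IsIdeal I) (A B : Set ℕ)
    (hAB : A ⊆ B) (hAinf : A.Infinite) (hBinf : B.Infinite) (hA : A ∉ I) :
    (ComplementedOn I B → ComplementedOn I A) ∧
      (IdealComplemented I → ComplementedOn I A) := by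
  classical
  constructor
  · refine transfer
      (pullOpt fun b : B => if h : (b : ℕ) ∈ A then some (⟨b, h⟩ : A) else none)
      (pullOpt fun a : A => some (⟨a, hAB a.2⟩ : B)) _ _ ?_ ?_ ?_
    · intro x
      ext a
      simp [pullOpt_apply]
    · intro x hx
      rw [mem_c0Restrict hI] at hx ⊢
      intro ε hε
      refine hI.2.1 _ _ ?_ (hx ε hε)
      rintro n ⟨hB, hn⟩
      by_cases h : n ∈ A
      · exact ⟨h, by simpa [pullOpt_apply, h] using hn⟩
      · simp [pullOpt_apply, h] at hn
        linarith
    · intro x hx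
      rw [mem_c0Restrict hI] at hx ⊢
      intro ε hε
      refine hI.2.1 _ _ ?_ (hx ε hε)
      rintro n ⟨h, hn⟩
      exact ⟨hAB h, hn⟩
  · refine transfer
      (pullOpt fun b : ℕ => if h : b ∈ A then some (⟨b, h⟩ : A) else none)
      (pullOpt fun a : A => some (a : ℕ)) _ _ ?_ ?_ ?_
    · intro x
      ext a
      simp [pullOpt_apply]
    · intro x hx
      rw [mem_c0Restrict hI] at hx
      intro ε hε
      refine hI.2.1 _ _ ?_ (hx ε hε)
      intro n hn
      by_cases h : n ∈ A
      · exact ⟨h, by simpa [pullOpt_apply, h] using hn⟩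
      · simp [pullOpt_apply, h] at hn
        linarith
    · intro x hx
      rw [mem_c0Restrict hI]
      intro ε hε
      refine hI.2.1 _ _ ?_ (hx ε hε)
      rintro n ⟨h, hn⟩
      exact hn
end

section
/- Let {I_n : n ∈ ℕ} be a collection of maximal ideals on ℕ and let {A_n : n ∈ ℕ} be a collection of pairwise disjoint subsets of ℕ such that ℕ \ A_n ∈ I_n for each n. Let I = ⋂_{n ∈ ℕ} I_n. Define P : ℓ∞ → ℓ∞ coordinatewise by (P x)(k) = x k − L_m(x) if k ∈ A_m (where L_m(x) denotes the I_m*-limit of x), and (P x)(k) = x k if k ∉ ⋃_n A_n. Then P is a well-defined (in particular, P x is a bounded sequence for every x ∈ ℓ∞) continuous linear map from ℓ∞ to ℓ∞ satisfying P ∘ P = P whose range is exactly c_{0,I}. -/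
open Set

/-- Uniqueness of limits along a proper ideal. -/
theorem lim_unique {J : Set (Set ℕ)} (hJ : IsProperIdeal J) {x : ℕ → ℝ} {a b : ℝ}
    (ha : ∀ ε > 0, {n : ℕ | ε ≤ |x n - a|} ∈ J)
    (hb : ∀ ε > 0, {n : ℕ | ε ≤ |x n - b|} ∈ J) : a = b := by
  by_contra hne
  have hpos : 0 < |a - b| := abs_pos.mpr (sub_ne_zero.mpr hne)
  apply hJ.2
  refine hJ.1.2.1 _ _ ?_ (hJ.1.2.2 _ _ (ha (|a - b| / 2) (by linarith))
    (hb (|a - b| / 2) (by linarith)))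
  intro n _
  by_contra hn
  simp only [mem_union, mem_setOf_eq, not_or, not_le] at hn
  have h1 := abs_sub_le a (x n) b
  rw [abs_sub_comm a (x n)] at h1
  linarith [hn.1, hn.2]

/-- Given maximal ideals `Iₙ` and pairwise disjoint sets `Aₙ` with `Aₙ ∈ Iₙ*`, the map
`x ↦ x − Σₘ (Iₘ*-lim x)·χ_{Aₘ}` is a well-defined continuous linear projection of ℓ∞
onto `c_{0,⋂ₙ Iₙ}`. Here `L x m` denotes the `Iₘ*`-limit of `x`. -/
theorem projection_formula (I : ℕ → Set (Set ℕ)) (hmax : ∀ n, IsMaxIdeal (I n))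
    (A : ℕ → Set ℕ) (hdisj : Pairwise fun m n => Disjoint (A m) (A n))
    (hA : ∀ n, (A n)ᶜ ∈ I n)
    (L : ellInf → ℕ → ℝ)
    (hL : ∀ (x : ellInf) (m : ℕ), ∀ ε > 0, {n : ℕ | ε ≤ |x n - L x m|} ∈ I m) :
    ∃ P : ellInf →L[ℝ] ellInf,
      (∀ (x : ellInf) (m : ℕ), ∀ k ∈ A m, (P x) k = x k - L x m) ∧
      (∀ (x : ellInf) (k : ℕ), k ∉ ⋃ m, A m → (P x) k = x k) ∧
      (∀ x, P (P x) = P x) ∧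
      Set.range P = c0I (⋂ n, I n) := by
  classical
  have hsub : ∀ m, ∀ S T : Set ℕ, S ⊆ T → T ∈ I m → S ∈ I m := fun m => (hmax m).1.1.2.1
  have hun : ∀ m, ∀ S T : Set ℕ, S ∈ I m → T ∈ I m → S ∪ T ∈ I m := fun m => (hmax m).1.1.2.2
  have huniq : ∀ (x : ellInf) (m : ℕ) (a : ℝ),
      (∀ ε > 0, {n : ℕ | ε ≤ |x n - a|} ∈ I m) → L x m = a :=
    fun x m a h => lim_unique (hmax m).1 (hL x m) h
  have hadd : ∀ (x y : ellInf) m, L (x + y) m = L x m + L y m := by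
    intro x y m
    apply huniq
    intro ε hε
    refine hsub m _ _ ?_ (hun m _ _ (hL x m (ε / 2) (by linarith)) (hL y m (ε / 2) (by linarith)))
    intro n hn
    by_contra hc
    simp only [mem_union, mem_setOf_eq, not_or, not_le] at hc hn
    have h1 : (x + y) n - (L x m + L y m) = (x n - L x m) + (y n - L y m) := by
      simp only [lp.coeFn_add, Pi.add_apply]; ring
    rw [h1] at hn
    linarith [abs_add_le (x n - L x m) (y n - L y m), hc.1, hc.2]
  have hsmul : ∀ (c : ℝ) (x : ellInf) m, L (c • x) m = c * L x m := by
    intro c x m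
    apply huniq
    intro ε hε
    have hc1 : 0 < |c| + 1 := by positivity
    refine hsub m _ _ ?_ (hL x m (ε / (|c| + 1)) (by positivity))
    intro n hn
    simp only [mem_setOf_eq] at hn ⊢
    have h1 : (c • x) n - c * L x m = c * (x n - L x m) := by
      simp only [lp.coeFn_smul, Pi.smul_apply, smul_eq_mul]; ring
    rw [h1, abs_mul] at hn
    rw [div_le_iff₀ hc1]
    nlinarith [abs_nonneg (x n - L x m)]
  have hxn : ∀ (x : ellInf) k, |x k| ≤ ‖x‖ := fun x k =>
    lp.norm_apply_le_norm ENNReal.top_ne_zero x k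
  have hbd : ∀ (x : ellInf) m, |L x m| ≤ ‖x‖ := by
    intro x m
    by_contra hc
    push Not at hc
    apply (hmax m).1.2
    refine hsub m _ _ ?_ (hL x m (|L x m| - ‖x‖) (by linarith))
    intro n _
    simp only [mem_setOf_eq]
    have h1 := abs_sub_abs_le_abs_sub (L x m) (x n)
    rw [abs_sub_comm] at h1
    linarith [hxn x n]
  let G : ellInf → ℕ → ℝ := fun x k => x k - if h : ∃ m, k ∈ A m then L x h.choose else 0
  have hG1 : ∀ (x : ellInf) (m : ℕ), ∀ k ∈ A m, G x k = x k - L x m := by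
    intro x m k hk
    have h : ∃ m, k ∈ A m := ⟨m, hk⟩
    have he : h.choose = m := by
      by_contra hne
      exact Set.disjoint_left.mp (hdisj hne) h.choose_spec hk
    simp only [G, dif_pos h, he]
  have hG2 : ∀ (x : ellInf) (k : ℕ), k ∉ ⋃ m, A m → G x k = x k := by
    intro x k hk
    have h : ¬ ∃ m, k ∈ A m := by simpa using hk
    simp only [G, dif_neg h, sub_zero]
  have hGb : ∀ (x : ellInf) k, ‖G x k‖ ≤ 2 * ‖x‖ := by
    intro x k
    rw [Real.norm_eq_abs]
    by_cases h : ∃ m, k ∈ A m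
    · obtain ⟨m, hm⟩ := h
      rw [hG1 x m k hm]
      linarith [abs_sub (x k) (L x m), hxn x k, hbd x m]
    · rw [hG2 x k (by simpa using h)]
      linarith [hxn x k, norm_nonneg x]
  have hmem : ∀ x : ellInf, Memℓp (E := fun _ : ℕ => ℝ) (G x) ⊤ := by
    intro x
    apply memℓp_infty
    refine ⟨2 * ‖x‖, ?_⟩
    rintro r ⟨n, rfl⟩
    exact hGb x n
  let P₀ : ellInf →ₗ[ℝ] ellInf :=
    { toFun := fun x => ⟨G x, hmem x⟩
      map_add' := by
        intro x y
        apply lp.ext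
        funext k
        change G (x + y) k = G x k + G y k
        by_cases h : ∃ m, k ∈ A m
        · obtain ⟨m, hm⟩ := h
          rw [hG1 _ m k hm, hG1 _ m k hm, hG1 _ m k hm, hadd]
          simp only [lp.coeFn_add, Pi.add_apply]; ring
        · have h' : k ∉ ⋃ m, A m := by simpa using h
          rw [hG2 _ k h', hG2 _ k h', hG2 _ k h']
          simp only [lp.coeFn_add, Pi.add_apply]
      map_smul' := by
        intro c x
        apply lp.ext
        funext k
        change G (c • x) k = c * G x k
        by_cases h : ∃ m, k ∈ A m
        · obtain ⟨m, hm⟩ := h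
          rw [hG1 _ m k hm, hG1 _ m k hm, hsmul]
          simp only [lp.coeFn_smul, Pi.smul_apply, smul_eq_mul]; ring
        · have h' : k ∉ ⋃ m, A m := by simpa using h
          rw [hG2 _ k h', hG2 _ k h']
          simp only [lp.coeFn_smul, Pi.smul_apply, smul_eq_mul] }
  let P : ellInf →L[ℝ] ellInf := P₀.mkContinuous 2 (fun x =>
    lp.norm_le_of_forall_le (by positivity) (fun k => hGb x k))
  have hP : ∀ x k, (P x) k = G x k := fun x k => rfl
  have hPL : ∀ x m, L (P x) m = 0 := by
    intro x m
    apply huniq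
    intro ε hε
    refine hsub m _ _ ?_ (hun m _ _ (hA m) (hL x m ε hε))
    intro n hn
    by_cases hnA : n ∈ A m
    · right
      simpa only [mem_setOf_eq, hP, hG1 x m n hnA, sub_zero] using hn
    · exact Or.inl hnA
  have hfix : ∀ x : ellInf, (∀ m, L x m = 0) → P x = x := by
    intro x hx
    apply lp.ext
    funext k
    rw [hP]
    by_cases h : ∃ m, k ∈ A m
    · obtain ⟨m, hm⟩ := h
      rw [hG1 _ m k hm, hx, sub_zero]
    · exact hG2 x k (by simpa using h)
  refine ⟨P, hG1, hG2, fun x => hfix _ (hPL x), ?_⟩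
  ext x
  constructor
  · rintro ⟨y, rfl⟩ ε hε
    rw [mem_iInter]
    intro m
    simpa only [hPL, sub_zero] using hL (P y) m ε hε
  · intro hx
    refine ⟨x, hfix x fun m => huniq x m 0 fun ε hε => ?_⟩
    simpa only [sub_zero] using mem_iInter.mp (hx ε hε) m
end

section
/- Let I be a strongly ω-maximal ideal on ℕ. Then there exists a continuous linear map Q : ℓ∞ → ℓ∞ such that: Q ∘ Q = Q; Q is positive (if x n ≥ 0 for all n then (Q x) n ≥ 0 for all n); the kernel of Q is exactly c_{0,I}; for every A ⊆ ℕ there is a set T(A) ⊆ ℕ with Q(χ_A) = χ_{T(A)}, and Q(χ_ℕ) = χ_ℕ; if A ⊆ B then T(A) ⊆ T(B); T(T(A)) = T(A) for all A ⊆ ℕ; T(A ∩ B) = T(A) ∩ T(B) for all A, B ⊆ ℕ; and the family ℬ = {B ⊆ ℕ : T(B) = B} is closed under arbitrary nonempty intersections. -/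
open Set

open Filter Topology in
lemma exists_limit (U : Ultrafilter ℕ) (x : ellInf) :
    ∃ L : ℝ, Tendsto (fun k => x k) (U : Filter ℕ) (𝓝 L) ∧ |L| ≤ ‖x‖ := by
  have hc : IsCompact (Set.Icc (-‖x‖) ‖x‖) := isCompact_Icc
  obtain ⟨L, hL, hle⟩ := hc.ultrafilter_le_nhds (U.map (fun k => x k)) (by
    rw [Filter.le_principal_iff, Ultrafilter.coe_map, Filter.mem_map]
    refine Filter.univ_mem' fun k => ?_
    have := lp.norm_apply_le_norm ENNReal.top_ne_zero x k
    rw [Real.norm_eq_abs] at this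
    exact abs_le.mp this)
  exact ⟨L, hle, abs_le.mpr hL⟩

lemma exists_fibers (U : ℕ → Ultrafilter ℕ) (hU : Function.Injective U)
    (hd : IsDiscreteSubset (Set.range U)) :
    ∃ f : ℕ → ℕ, ∀ n, {k | f k = n} ∈ U n := by
  have hB : ∀ n, ∃ B : Set ℕ, B ∈ U n ∧ ∀ m, m ≠ n → B ∉ U m := by
    intro n
    obtain ⟨V, hV, hVS⟩ := hd (U n) ⟨n, rfl⟩
    have hn : U n ∈ V := by
      have : U n ∈ V ∩ Set.range U := by rw [hVS]; rfl
      exact this.1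
    obtain ⟨W, ⟨B, rfl⟩, hnW, hWV⟩ := ultrafilterBasis_is_basis.exists_subset_of_mem_open hn hV
    refine ⟨B, hnW, fun m hm hBm => hm ?_⟩
    have : U m ∈ V ∩ Set.range U := ⟨hWV hBm, m, rfl⟩
    rw [hVS] at this
    exact hU this
  choose B hB1 hB2 using hB
  classical
  refine ⟨fun k => if h : ∃ n, k ∈ B n then Nat.find h else 0, fun n => ?_⟩
  have h1 : (⋂ m ∈ Finset.range n, (B m)ᶜ) ∈ U n := by
    rw [← Ultrafilter.mem_coe, Filter.biInter_finset_mem]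
    intro m hm
    rw [Finset.mem_range] at hm
    rw [Ultrafilter.mem_coe, Ultrafilter.compl_mem_iff_notMem]
    exact hB2 m n hm.ne'
  filter_upwards [hB1 n, h1] with k hk hk2
  have h : ∃ n, k ∈ B n := ⟨n, hk⟩
  simp only [dif_pos h]
  rw [Nat.find_eq_iff]
  refine ⟨hk, fun m hm => ?_⟩
  simp only [Set.mem_iInter, Finset.mem_range] at hk2
  exact hk2 m hm

/-- For a strongly ω-maximal ideal `I`, there is a positive continuous linear projection `Q`
on ℓ∞ with kernel `c_{0,I}`, mapping indicator sequences to indicator sequences via a map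
`T` which is monotone, idempotent, meet-preserving, fixes `ℕ`, and whose family of fixed
sets is closed under arbitrary nonempty intersections. -/
theorem stronglyOmegaMax_projection (I : Set (Set ℕ)) (h : StronglyOmegaMax I) :
    ∃ (Q : ellInf →L[ℝ] ellInf) (T : Set ℕ → Set ℕ),
      (∀ x, Q (Q x) = Q x) ∧
      (∀ x : ellInf, (∀ n, 0 ≤ x n) → ∀ n, 0 ≤ (Q x) n) ∧
      (∀ x : ellInf, Q x = 0 ↔ x ∈ c0I I) ∧
      (∀ A : Set ℕ, Q (chi A) = chi (T A)) ∧
      Q (chi Set.univ) = chi Set.univ ∧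
      (∀ A B : Set ℕ, A ⊆ B → T A ⊆ T B) ∧
      (∀ A : Set ℕ, T (T A) = T A) ∧
      (∀ A B : Set ℕ, T (A ∩ B) = T A ∩ T B) ∧
      (∀ 𝒞 : Set (Set ℕ), 𝒞.Nonempty → (∀ B ∈ 𝒞, T B = B) → T (⋂₀ 𝒞) = ⋂₀ 𝒞) := by
  classical
  obtain ⟨J, hJ, hJd, ⟨U, hU, hd⟩, rfl⟩ := h
  have hinj : Function.Injective U := by
    intro m n hmn
    by_contra hne
    apply hJd m n hne
    ext A
    have h1 := hU m Aᶜ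
    have h2 := hU n Aᶜ
    rw [compl_compl] at h1 h2
    rw [← h1, ← h2, hmn]
  obtain ⟨f, hf⟩ := exists_fibers U hinj hd
  choose φ hφ hφb using fun n x => exists_limit (U n) x
  have uniq : ∀ n x L, Filter.Tendsto (fun k => x k) (U n : Filter ℕ) (nhds L) → φ n x = L :=
    fun n x L h => tendsto_nhds_unique (hφ n x) h
  have hsurj : ∀ n, ∃ k, f k = n := fun n => (U n).nonempty_of_mem (hf n)
  let Q0 : ellInf →ₗ[ℝ] ellInf :=
    { toFun := fun x => ⟨fun k => φ (f k) x, by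
        apply memℓp_infty
        refine ⟨‖x‖, ?_⟩
        rintro r ⟨n, rfl⟩
        exact hφb _ _⟩
      map_add' := by
        intro x y
        ext k
        exact uniq _ _ _ ((hφ (f k) x).add (hφ (f k) y))
      map_smul' := by
        intro c x
        ext k
        exact uniq _ _ _ ((hφ (f k) x).const_mul c) }
  let Q : ellInf →L[ℝ] ellInf := Q0.mkContinuous 1 (by
    intro x
    rw [one_mul]
    exact lp.norm_le_of_forall_le (norm_nonneg _) (fun k => hφb _ _))
  have hQ : ∀ x k, Q x k = φ (f k) x := fun _ _ => rfl
  have hsat : ∀ C : Set ℕ, (∀ k l, f k = f l → k ∈ C → l ∈ C) →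
      {k | C ∈ U (f k)} = C := by
    intro C hC
    ext k
    constructor
    · intro hk
      obtain ⟨l, hl1, hl2⟩ := (U (f k)).nonempty_of_mem (Filter.inter_mem hk (hf (f k)))
      exact hC l k hl2 hl1
    · intro hk
      show C ∈ U (f k)
      filter_upwards [hf (f k)] with l hl
      exact hC k l hl.symm hk
  have hchi : ∀ A : Set ℕ, Q (chi A) = chi {k | A ∈ U (f k)} := by
    intro A
    ext k
    rw [hQ]
    apply uniq
    apply tendsto_const_nhds.congr'
    by_cases hA : A ∈ U (f k)
    · filter_upwards [hA] with l hl
      simp [chi, hA, hl]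
    · filter_upwards [Ultrafilter.compl_mem_iff_notMem.mpr hA] with l hl
      have hl' : l ∉ A := hl
      simp [chi, hA, hl']
  refine ⟨Q, fun A => {k | A ∈ U (f k)}, ?_, ?_, ?_, hchi, ?_, ?_, ?_, ?_, ?_⟩
  · intro x
    ext k
    rw [hQ, hQ]
    apply uniq
    apply tendsto_const_nhds.congr'
    filter_upwards [hf (f k)] with l hl
    have hl' : f l = f k := hl
    rw [hQ, hl']
  · intro x hx k
    rw [hQ]
    exact ge_of_tendsto' (hφ (f k) x) hx
  · intro x
    have key : ∀ n, φ n x = 0 ↔ ∀ ε > 0, {k : ℕ | ε ≤ |x k|} ∈ J n := by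
      intro n
      have e : ∀ ε : ℝ, {k : ℕ | ε ≤ |x k|} ∈ J n ↔ ∀ᶠ k in (U n : Filter ℕ), |x k| < ε := by
        intro ε
        have h1 := hU n {k : ℕ | ε ≤ |x k|}ᶜ
        rw [compl_compl] at h1
        rw [← h1]
        have : {k : ℕ | ε ≤ |x k|}ᶜ = {k : ℕ | |x k| < ε} := by ext; simp
        rw [this]
        rfl
      simp only [e]
      constructor
      · intro h0 ε hε
        have := hφ n x
        rw [h0, Metric.tendsto_nhds] at this
        simpa using this ε hε
      · intro h0
        apply uniq
        rw [Metric.tendsto_nhds]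
        intro ε hε
        simpa using h0 ε hε
    have h1 : Q x = 0 ↔ ∀ n, φ n x = 0 := by
      constructor
      · intro h0 n
        obtain ⟨k, rfl⟩ := hsurj n
        rw [← hQ, h0]
        rfl
      · intro h0
        ext k
        rw [hQ, h0]
        rfl
    rw [h1]
    simp only [key, c0I, Set.mem_ofPred_eq, Set.mem_iInter]
    exact ⟨fun h ε hε n => h n ε hε, fun h n ε hε => h ε hε n⟩
  · rw [hchi]
    congr 1
    ext k
    exact iff_of_true (Filter.univ_mem : Set.univ ∈ (U (f k) : Filter ℕ)) trivial
  · intro A B hAB k hk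
    exact Filter.mem_of_superset hk hAB
  · intro A
    apply hsat
    intro k l hkl hk
    simpa [← hkl] using hk
  · intro A B
    ext k
    exact Filter.inter_mem_iff
  · intro 𝒞 _ h𝒞
    apply hsat
    intro k l hkl hk B hB
    have h1 := hk B hB
    rw [← h𝒞 B hB] at h1 ⊢
    simpa [← hkl] using h1
end

section
/- Let I be a proper ideal on ℕ. If I is complemented, then every I-AD family of subsets of ℕ is countable. -/
open Set

/-- An `I`-almost disjoint family: no member is in `I` and pairwise intersections are in `I`. -/
def IADFamily (I : Set (Set ℕ)) (𝒜 : Set (Set ℕ)) : Prop :=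
  (∀ A ∈ 𝒜, A ∉ I) ∧ ∀ A ∈ 𝒜, ∀ B ∈ 𝒜, A ≠ B → A ∩ B ∈ I

theorem ideal_biUnion {ι : Type*} (I : Set (Set ℕ)) (hI : IsIdeal I) (s : Finset ι)
    (f : ι → Set ℕ) (h : ∀ i ∈ s, f i ∈ I) : (⋃ i ∈ s, f i) ∈ I := by
  classical
  induction s using Finset.induction_on with
  | empty => simpa using hI.1 ∅ Set.finite_empty
  | insert a s ha ih =>
    rw [Finset.set_biUnion_insert]
    exact hI.2.2 _ _ (h a (by simp)) (ih fun i hi => h i (by simp [hi]))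

theorem chi_apply (A : Set ℕ) (n : ℕ) : (chi A : ℕ → ℝ) n = A.indicator (fun _ => (1:ℝ)) n := rfl

theorem card_bound (I : Set (Set ℕ)) (hI : IsIdeal I) (𝒜 : Set (Set ℕ)) (hAD : IADFamily I 𝒜)
    (φ : ellInf →L[ℝ] ℝ) (hφ : ∀ x ∈ c0I I, φ x = 0) (F : Finset (Set ℕ)) (hF : ↑F ⊆ 𝒜) :
    ∑ A ∈ F, |φ (chi A)| ≤ ‖φ‖ := by
  classical
  set D : Set ℕ := ⋃ p ∈ F.offDiag, p.1 ∩ p.2 with hD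
  have hDI : D ∈ I := by
    apply ideal_biUnion I hI
    intro p hp
    rw [Finset.mem_offDiag] at hp
    exact hAD.2 _ (hF hp.1) _ (hF hp.2.1) hp.2.2
  set σ : Set ℕ → ℝ := fun A => SignType.sign (φ (chi A)) with hσ
  have hσ1 : ∀ A, |σ A| ≤ 1 := by
    intro A
    simp only [hσ]
    rcases lt_trichotomy (φ (chi A)) 0 with h | h | h <;> simp [h]
  set x : ellInf := ∑ A ∈ F, σ A • chi A with hx
  have hxn : ∀ n, (x : ℕ → ℝ) n = ∑ A ∈ F, σ A * A.indicator (fun _ => (1:ℝ)) n := by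
    intro n
    rw [hx, lp.coeFn_sum, Finset.sum_apply]
    rfl
  have hφx : φ x = ∑ A ∈ F, |φ (chi A)| := by
    rw [hx, map_sum]
    refine Finset.sum_congr rfl fun A _ => ?_
    rw [map_smul, smul_eq_mul, hσ]
    exact sign_mul_self _
  set y : ellInf := chi Dᶜ * x with hy
  have hyn : ∀ n, (y : ℕ → ℝ) n = Dᶜ.indicator (fun _ => (1:ℝ)) n * (x : ℕ → ℝ) n := by
    intro n
    rw [hy, lp.infty_coeFn_mul]; rfl
  have hxy : x - y ∈ c0I I := by
    intro ε hε
    refine hI.2.1 _ D ?_ hDI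
    intro n hn
    by_contra hnD
    have : (x - y : ellInf) n = 0 := by
      rw [lp.coeFn_sub, Pi.sub_apply, hyn]
      simp [hnD]
    simp only [Set.mem_setOf_eq, this, abs_zero] at hn
    linarith
  have hyb : ‖y‖ ≤ 1 := by
    apply lp.norm_le_of_forall_le zero_le_one
    intro n
    rw [hyn]
    by_cases hnD : n ∈ D
    · simp [hnD]
    · have : (F.filter (fun A => n ∈ A)).card ≤ 1 := by
        rw [Finset.card_le_one]
        intro A hA B hB
        by_contra hne
        simp only [Finset.mem_filter] at hA hB
        apply hnD
        simp only [hD, Set.mem_iUnion]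
        exact ⟨(A, B), Finset.mem_offDiag.2 ⟨hA.1, hB.1, hne⟩, hA.2, hB.2⟩
      rw [Set.indicator_of_mem (show n ∈ Dᶜ from hnD), one_mul, hxn, Real.norm_eq_abs]
      calc |∑ A ∈ F, σ A * A.indicator (fun _ => (1:ℝ)) n|
          ≤ ∑ A ∈ F, |σ A * A.indicator (fun _ => (1:ℝ)) n| := Finset.abs_sum_le_sum_abs _ _
        _ ≤ ∑ A ∈ F, if n ∈ A then (1:ℝ) else 0 := by
            refine Finset.sum_le_sum fun A _ => ?_
            by_cases h : n ∈ A
            · simpa [h] using hσ1 A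
            · simp [h]
        _ = ((F.filter (fun A => n ∈ A)).card : ℝ) := by simp
        _ ≤ 1 := by exact_mod_cast this
  have h1 : φ x = φ y := by
    have := hφ _ hxy
    rw [map_sub] at this
    linarith
  rw [← hφx, h1]
  calc φ y ≤ ‖φ y‖ := le_abs_self _
    _ ≤ ‖φ‖ * ‖y‖ := φ.le_opNorm y
    _ ≤ ‖φ‖ := mul_le_of_le_one_right (norm_nonneg _) hyb

theorem countable_functional (I : Set (Set ℕ)) (hI : IsIdeal I) (𝒜 : Set (Set ℕ))
    (hAD : IADFamily I 𝒜) (φ : ellInf →L[ℝ] ℝ) (hφ : ∀ x ∈ c0I I, φ x = 0) :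
    {A ∈ 𝒜 | φ (chi A) ≠ 0}.Countable := by
  have hs : Summable (fun A : 𝒜 => |φ (chi A.1)|) := by
    refine summable_of_sum_le (c := ‖φ‖) (fun _ => abs_nonneg _) fun u => ?_
    have := card_bound I hI 𝒜 hAD φ hφ (u.map (Function.Embedding.subtype _)) (by
      intro A hA
      simp at hA
      exact hA.1)
    simpa using this
  have hc := (hs.countable_support).image (Subtype.val)
  refine hc.mono ?_
  rintro A ⟨hA, hne⟩
  exact ⟨⟨A, hA⟩, by simpa using hne, rfl⟩

/-- If a proper ideal `I` is complemented, then every `I`-AD family is countable. -/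
theorem countable_of_complemented (I : Set (Set ℕ)) (hI : IsProperIdeal I)
    (hc : IdealComplemented I) (𝒜 : Set (Set ℕ)) (hAD : IADFamily I 𝒜) :
    𝒜.Countable := by
  obtain ⟨P, hP, hr⟩ := hc
  let ev : ℕ → (ellInf →L[ℝ] ℝ) := fun n => LinearMap.mkContinuous
    { toFun := fun x => (x : ℕ → ℝ) n, map_add' := fun _ _ => rfl, map_smul' := fun _ _ => rfl } 1
    (fun x => by rw [one_mul]; exact lp.norm_apply_le_norm ENNReal.top_ne_zero x n)
  let T : ellInf →L[ℝ] ellInf := ContinuousLinearMap.id ℝ ellInf - P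
  have hT : ∀ x, T x = x - P x := fun x => rfl
  have hcnt : (⋃ n, {A ∈ 𝒜 | ((ev n).comp T) (chi A) ≠ 0}).Countable := by
    refine Set.countable_iUnion fun n => ?_
    refine countable_functional I hI.1 𝒜 hAD _ fun x hx => ?_
    rw [← hr] at hx
    obtain ⟨z, rfl⟩ := hx
    rw [ContinuousLinearMap.comp_apply, hT, hP, sub_self, map_zero]
  refine hcnt.mono fun A hA => ?_
  by_contra hcon
  have h0 : T (chi A) = 0 := by
    ext n
    by_contra hn
    exact hcon (Set.mem_iUnion.2 ⟨n, hA, hn⟩)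
  have hmem : chi A ∈ c0I I := by
    rw [← hr]
    exact ⟨chi A, (sub_eq_zero.1 h0).symm⟩
  refine hAD.1 A hA (hI.1.2.1 _ _ ?_ (hmem 1 one_pos))
  intro n hn
  simp [chi_apply, hn]
end

section
/- Let I be a proper ideal on ℕ and suppose there is a continuous linear map P : ℓ∞ → ℓ∞ with P ∘ P = P and range equal to c_{0,I}, such that Q := id − P satisfies: for all A, B ⊆ ℕ and all n ∈ ℕ, if (Q χ_A)(n) ≠ 0 and (Q χ_B)(n) ≠ 0 then (Q χ_{A ∩ B})(n) ≠ 0. Then I is a countable intersection of maximal ideals: there exists a nonempty countable collection of maximal ideals on ℕ whose intersection equals I. -/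
open Set

/-- If `c_{0,I}` is complemented in ℓ∞ by a projection `P` such that `Q = id − P`
satisfies the multiplicative condition on indicator sequences, then `I` is a countable
intersection of maximal ideals (ω-maximal). -/
theorem omegaMax_of_complemented_Qmult (I : Set (Set ℕ)) (hI : IsProperIdeal I)
    (P : ellInf →L[ℝ] ellInf) (hP : ∀ x, P (P x) = P x)
    (hrange : Set.range P = c0I I)
    (hQ : ∀ (A B : Set ℕ) (n : ℕ),
      (chi A - P (chi A)) n ≠ 0 → (chi B - P (chi B)) n ≠ 0 →
        (chi (A ∩ B) - P (chi (A ∩ B))) n ≠ 0) :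
    ∃ S : Set (Set (Set ℕ)), S.Countable ∧ S.Nonempty ∧ (∀ K ∈ S, IsMaxIdeal K) ∧
      ⋂₀ S = I := by
  obtain ⟨⟨hfin, hsub, hun⟩, huniv⟩ := hI
  -- membership in `I` is vanishing of all the functionals
  have hmem : ∀ A : Set ℕ, A ∈ I ↔ ∀ n, (chi A - P (chi A)) n = 0 := by
    intro A
    have h1 : A ∈ I ↔ chi A ∈ c0I I := by
      constructor
      · intro hA ε hε
        refine hsub _ A ?_ hA
        intro n hn
        by_contra hnA
        have h0 : (chi A) n = 0 := by simp [chi, hnA]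
        simp only [Set.mem_setOf_eq, h0, abs_zero] at hn
        linarith
      · intro h
        refine hsub _ _ ?_ (h 1 one_pos)
        intro n hn
        have h0 : (chi A) n = 1 := by simp [chi, hn]
        simp [h0]
    rw [h1, ← hrange]
    constructor
    · rintro ⟨x, hx⟩ n
      rw [← hx, hP, sub_self]
      rfl
    · intro h
      refine ⟨chi A, ?_⟩
      have h0 : chi A - P (chi A) = 0 := by
        ext n
        exact h n
      exact (sub_eq_zero.mp h0).symm
  have hadd : ∀ (A B : Set ℕ) (n : ℕ), Disjoint A B →
      (chi (A ∪ B) - P (chi (A ∪ B))) n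
        = (chi A - P (chi A)) n + (chi B - P (chi B)) n := by
    intro A B n hAB
    have h0 : chi (A ∪ B) = chi A + chi B := by
      ext m
      change (A ∪ B).indicator (fun _ => (1:ℝ)) m
        = A.indicator (fun _ => (1:ℝ)) m + B.indicator (fun _ => (1:ℝ)) m
      rw [Set.indicator_union_of_disjoint hAB]
    have h2 : chi (A ∪ B) - P (chi (A ∪ B))
        = (chi A - P (chi A)) + (chi B - P (chi B)) := by
      rw [h0, map_add]
      abel
    rw [h2]
    rfl
  generalize hμ : (fun (n : ℕ) (A : Set ℕ) => (chi A - P (chi A)) n) = μ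
  have hμ' : ∀ (A : Set ℕ) (n : ℕ), (chi A - P (chi A)) n = μ n A := by
    intro A n
    rw [← hμ]
  simp only [hμ'] at hmem hadd hQ
  have hempty : ∀ n, μ n ∅ = 0 := (hmem ∅).1 (hfin _ Set.finite_empty)
  have hcompl : ∀ n A, μ n A + μ n Aᶜ = μ n Set.univ := by
    intro n A
    rw [← hadd A Aᶜ n disjoint_compl_right, Set.union_compl_self]
  have hdisj : ∀ n A B, Disjoint A B → μ n A = 0 ∨ μ n B = 0 := by
    intro n A B hAB
    by_contra! h
    have := hQ A B n h.1 h.2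
    rw [hAB.inter_eq] at this
    exact this (hempty n)
  have hne : ∀ n, μ n Set.univ = 0 → ∀ A, μ n A = 0 := by
    intro n hn A
    have h1 := hcompl n A
    rcases hdisj n A Aᶜ disjoint_compl_right with h | h
    · exact h
    · linarith
  have hdown : ∀ n A B, A ⊆ B → μ n B = 0 → μ n A = 0 := by
    intro n A B hAB hB
    by_cases hn : μ n Set.univ = 0
    · exact hne n hn A
    · have h1 := hcompl n B
      rcases hdisj n A Bᶜ (disjoint_compl_right.mono_left hAB) with h | h
      · exact h
      · exact absurd (by linarith) hn
  refine ⟨(fun n => {A | μ n A = 0}) '' {n | μ n Set.univ ≠ 0},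
    (Set.to_countable _).image _, ?_, ?_, ?_⟩
  · have h1 : ¬ ∀ n, μ n Set.univ = 0 := fun h => huniv ((hmem _).2 h)
    push Not at h1
    obtain ⟨n, hn⟩ := h1
    exact ⟨_, n, hn, rfl⟩
  · rintro K ⟨n, hn, rfl⟩
    refine ⟨⟨⟨fun A hA => (hmem A).1 (hfin A hA) n, hdown n, ?_⟩, hn⟩,
      fun A => hdisj n A Aᶜ disjoint_compl_right⟩
    intro A B hA hB
    have h1 := hadd A (B \ A) n Set.disjoint_sdiff_right
    rw [Set.union_diff_self] at h1
    have h2 := hdown n (B \ A) B Set.diff_subset hB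
    have hA' : μ n A = 0 := hA
    change μ n (A ∪ B) = 0
    rw [h1, h2, hA', add_zero]
  · ext A
    rw [hmem A]
    constructor
    · intro h n
      by_cases hn : μ n Set.univ = 0
      · exact hne n hn A
      · exact h _ ⟨n, hn, rfl⟩
    · rintro h K ⟨n, hn, rfl⟩
      exact h n
end

section
/- Let I be a proper ideal on ℕ. Suppose there is a continuous linear map Q : ℓ∞ → ℓ∞ and a function T : Set ℕ → Set ℕ such that: Q ∘ Q = Q; Q is positive (if x n ≥ 0 for all n then (Q x) n ≥ 0 for all n); the kernel of Q is exactly c_{0,I}; Q(χ_A) = χ_{T(A)} for every A ⊆ ℕ; T(A ∩ B) = T(A) ∩ T(B) for all A, B ⊆ ℕ; and the family ℬ = {B ⊆ ℕ : T(B) = B} is closed under arbitrary nonempty intersections. Then there exists a countable (finite or countably infinite) discrete collection of pairwise distinct maximal ideals on ℕ whose intersection equals I. -/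
open Set

lemma chi_apply_aux (A : Set ℕ) (n : ℕ) : (chi A) n = A.indicator (fun _ => (1:ℝ)) n := rfl

lemma chi_inj_aux {A B : Set ℕ} (h : chi A = chi B) : A = B := by
  ext n
  have h1 : (chi A) n = (chi B) n := by rw [h]
  rw [chi_apply_aux, chi_apply_aux] at h1
  by_cases hA : n ∈ A <;> by_cases hB : n ∈ B <;> simp_all

lemma chi_empty_aux : chi ∅ = 0 := by
  ext n
  rw [chi_apply_aux]
  simp

lemma chi_compl_aux (A : Set ℕ) : chi A + chi Aᶜ = chi Set.univ := by
  ext n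
  rw [lp.coeFn_add, Pi.add_apply, chi_apply_aux, chi_apply_aux, chi_apply_aux]
  by_cases hA : n ∈ A <;> simp [hA]

lemma chi_mem_c0I_aux (I : Set (Set ℕ)) (hI : IsIdeal I) (A : Set ℕ) :
    chi A ∈ c0I I ↔ A ∈ I := by
  constructor
  · intro h
    refine hI.2.1 _ _ ?_ (h 1 one_pos)
    intro n hn
    show 1 ≤ |(chi A) n|
    rw [chi_apply_aux]
    simp [hn]
  · intro h ε hε
    refine hI.2.1 _ _ ?_ h
    intro n hn
    by_contra hA
    have h2 : ε ≤ |(chi A) n| := hn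
    rw [chi_apply_aux] at h2
    simp [hA] at h2
    linarith

/-- If there is a positive continuous linear projection `Q` on ℓ∞ with kernel `c_{0,I}`
sending indicator sequences to indicator sequences via a meet-preserving map `T` whose
family of fixed sets is closed under arbitrary nonempty intersections, then `I` is the
intersection of a countable discrete collection of pairwise distinct maximal ideals. -/
theorem stronglyOmegaMax_of_projection (I : Set (Set ℕ)) (hI : IsProperIdeal I)
    (Q : ellInf →L[ℝ] ellInf) (T : Set ℕ → Set ℕ)
    (hQQ : ∀ x, Q (Q x) = Q x)
    (hpos : ∀ x : ellInf, (∀ n, 0 ≤ x n) → ∀ n, 0 ≤ (Q x) n)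
    (hker : ∀ x : ellInf, Q x = 0 ↔ x ∈ c0I I)
    (hchi : ∀ A : Set ℕ, Q (chi A) = chi (T A))
    (hmeet : ∀ A B : Set ℕ, T (A ∩ B) = T A ∩ T B)
    (hfix : ∀ 𝒞 : Set (Set ℕ), 𝒞.Nonempty → (∀ B ∈ 𝒞, T B = B) → T (⋂₀ 𝒞) = ⋂₀ 𝒞) :
    ∃ S : Set (Set (Set ℕ)), S.Countable ∧ S.Nonempty ∧ (∀ K ∈ S, IsMaxIdeal K) ∧
      IsDiscreteSubset (DualSet S) ∧ ⋂₀ S = I := by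
  have hTe : T ∅ = ∅ := by
    apply chi_inj_aux
    rw [← hchi, chi_empty_aux, map_zero]
  have hTI : ∀ A, T A = ∅ ↔ A ∈ I := by
    intro A
    rw [← chi_mem_c0I_aux I hI.1, ← hker, hchi]
    constructor
    · intro h
      rw [h, chi_empty_aux]
    · intro h
      apply chi_inj_aux
      rw [h, chi_empty_aux]
  have hTT : ∀ A, T (T A) = T A := by
    intro A
    apply chi_inj_aux
    rw [← hchi, ← hchi, hQQ]
  have hmono : ∀ A B, A ⊆ B → T A ⊆ T B := by
    intro A B h
    have h1 := hmeet A B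
    rw [Set.inter_eq_left.2 h] at h1
    rw [h1]
    exact Set.inter_subset_right
  have hcompl : ∀ n ∈ T Set.univ, ∀ A, n ∈ T Aᶜ ↔ n ∉ T A := by
    intro n hn A
    have h1 : chi (T A) + chi (T Aᶜ) = chi (T Set.univ) := by
      rw [← hchi, ← hchi, ← hchi, ← map_add, chi_compl_aux]
    have h2 : (chi (T A) + chi (T Aᶜ)) n = (chi (T Set.univ)) n := by rw [h1]
    rw [lp.coeFn_add, Pi.add_apply, chi_apply_aux, chi_apply_aux, chi_apply_aux] at h2
    by_cases hA : n ∈ T A <;> by_cases hB : n ∈ T Aᶜ <;> simp_all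
  -- the maximal ideals
  let J : ℕ → Set (Set ℕ) := fun n => {A | n ∉ T A}
  have hne : (T Set.univ).Nonempty := by
    rw [Set.nonempty_iff_ne_empty]
    intro h
    exact hI.2 ((hTI _).1 h)
  refine ⟨J '' T Set.univ, (Set.to_countable _).image _, hne.image _, ?_, ?_, ?_⟩
  · rintro K ⟨n, hn, rfl⟩
    refine ⟨⟨⟨?_, ?_, ?_⟩, ?_⟩, ?_⟩
    · intro A hA
      show n ∉ T A
      rw [(hTI A).2 (hI.1.1 A hA)]
      exact Set.notMem_empty n
    · intro A B hAB hB hA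
      exact hB (hmono A B hAB hA)
    · intro A B hA hB
      show n ∉ T (A ∪ B)
      rw [← hcompl n hn, Set.compl_union, hmeet]
      exact ⟨(hcompl n hn A).2 hA, (hcompl n hn B).2 hB⟩
    · intro h
      exact h hn
    · intro A
      by_cases hA : n ∈ T A
      · right
        show n ∉ T Aᶜ
        rw [hcompl n hn]
        exact not_not.2 hA
      · exact Or.inl hA
  · rintro U ⟨K, ⟨n, hn, rfl⟩, hU⟩
    have hdual : ∀ m ∈ T Set.univ, ∀ W : Ultrafilter ℕ, IsDualUltra (J m) W →
        ∀ A, A ∈ W ↔ m ∈ T A := by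
      intro m hm W hW A
      rw [hW A]
      show m ∉ T Aᶜ ↔ _
      rw [hcompl m hm, not_not]
    let C : Set (Set ℕ) := {B | T B = B ∧ n ∈ B}
    have hfixa : T (⋂₀ C) = ⋂₀ C := hfix C ⟨T Set.univ, hTT _, hn⟩ (fun B hB => hB.1)
    have hna : n ∈ ⋂₀ C := fun B hB => hB.2
    refine ⟨{W | ⋂₀ C ∈ W}, ultrafilter_isOpen_basic _, ?_⟩
    ext W
    simp only [Set.mem_inter_iff, Set.mem_setOf_eq, Set.mem_singleton_iff]
    constructor
    · rintro ⟨hW, K, ⟨m, hm, rfl⟩, hWm⟩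
      rw [hdual m hm W hWm, hfixa] at hW
      have key : ∀ A, n ∈ T A → m ∈ T A := fun A hA => hW (T A) ⟨hTT A, hA⟩
      ext A
      rw [hdual m hm W hWm, hdual n hn U hU]
      refine ⟨fun h => ?_, key A⟩
      by_contra hA
      exact (hcompl m hm A).1 (key _ ((hcompl n hn A).2 hA)) h
    · rintro rfl
      refine ⟨?_, J n, ⟨n, hn, rfl⟩, hU⟩
      rw [hdual n hn W hU, hfixa]
      exact hna
  · ext A
    rw [← hTI, Set.mem_sInter]
    constructor
    · intro h
      rw [Set.eq_empty_iff_forall_notMem]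
      intro n hn
      exact h (J n) ⟨n, hmono _ _ (Set.subset_univ A) hn, rfl⟩ hn
    · rintro h K ⟨n, hn, rfl⟩
      show n ∉ T A
      rw [h]
      exact Set.notMem_empty n
end
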